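/- Let Ω ⊆ ℂⁿ be a convex domain and let K, L ⊆ Ω be compact subsets. Then the following are equivalent: (1) there exists a holomorphic function f : Ω → ℂ such that the polynomially convex hulls of f(K) and f(L) in ℂ (hulls with respect to entire functions) are disjoint; (2) the 𝒪(Ω)-convex hulls satisfy K̂ ∩ L̂ = ∅ and the 𝒪(Ω)-convex hull of K ∪ L equals K̂ ∪ L̂. In particular, if K and L are disjoint compact 𝒪(Ω)-convex sets, then K ∪ L is 𝒪(Ω)-convex if and only if condition (1) holds. -/

import Mathlib

open scoped Manifold Topology
open Set Metric Filter

noncomputable section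

/-- The complex Euclidean space `ℂⁿ`. -/
abbrev CSpace (n : ℕ) : Type := EuclideanSpace ℂ (Fin n)

/-- The `𝒪(Ω)`-convex hull of a set `K ⊆ Ω`. -/
def OHull {n : ℕ} (Ω K : Set (CSpace n)) : Set (CSpace n) :=
  {x ∈ Ω | ∀ f : CSpace n → ℂ, DifferentiableOn ℂ f Ω → ‖f x‖ ≤ ⨆ y : K, ‖f ↑y‖}

/-- `τ` is a generalized translation of `Ω`: for every compact `𝒪(Ω)`-convex `K ⊆ Ω` there is
`j ≥ 1` with `τʲ(K) ∩ K = ∅` and `τʲ(K) ∪ K` again `𝒪(Ω)`-convex. -/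
def IsGenTranslation {n : ℕ} (Ω : Set (CSpace n)) (τ : CSpace n → CSpace n) : Prop :=
  ∀ K : Set (CSpace n), IsCompact K → K ⊆ Ω → OHull Ω K = K →
    ∃ j : ℕ, 1 ≤ j ∧ (τ^[j] '' K) ∩ K = ∅ ∧
      OHull Ω ((τ^[j] '' K) ∪ K) = (τ^[j] '' K) ∪ K

/-- The polynomially convex hull of a subset of `ℂ` (hull with respect to entire functions). -/
def PHull (A : Set ℂ) : Set ℂ :=
  {z | ∀ g : ℂ → ℂ, Differentiable ℂ g → ‖g z‖ ≤ ⨆ w : A, ‖g ↑w‖}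

/-!
The heart of the matter is the Oka–Weil theorem. Cutting a box along real hyperplanes and splitting
holomorphic functions across each cut by a Cauchy integral, one extends holomorphic functions from
the graph of `p` over a polyhedron to the cylinder over it; removing the conditions `|p| < 1` one
at a time reduces approximation on polyhedra to power series on a polydisc.

If the hulls of `K` and `L` are disjoint with union the hull of `K ∪ L`, approximating the function
equal to `0` near one and to `1` near the other separates the images. Conversely, let the hulls `A`
of `f(K)` and `B` of `f(L)` be disjoint. Then `A ∪ B` is polynomially convex: if its hull contained
a further point `b`, the points added by the hull would form a bounded open set with frontier in
`A ∪ B`, so that a logarithm of `z - b` on `A ∪ B`, glued from logarithms on `A` and on `B`, would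
extend to one on a large circle. Hence some entire `g` is close to `0` on `A` and to `1` on `B`, and
multiplying test functions by `g ∘ f` or `1 - g ∘ f` (Kallin) splits the hull of `K ∪ L`.
-/

section HolNear

variable {E F G : Type*} [NormedAddCommGroup E] [NormedSpace ℂ E]
  [NormedAddCommGroup F] [NormedSpace ℂ F] [NormedAddCommGroup G] [NormedSpace ℂ G]

/-- `f` is holomorphic on some neighbourhood of the set `Q`; for compact `Q` these are the
representatives of the germs of holomorphic maps along `Q`. -/
def HolNear (f : E → F) (Q : Set E) : Prop :=
  ∀ᶠ y in 𝓝ˢ Q, DifferentiableAt ℂ f y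

namespace HolNear

variable {f g : E → F} {Q R : Set E}

lemma mono (h : HolNear f R) (hQ : Q ⊆ R) : HolNear f Q :=
  Filter.Eventually.filter_mono (nhdsSet_mono hQ) h

lemma congr (h : HolNear f Q) (hfg : g =ᶠ[𝓝ˢ Q] f) : HolNear g Q := by
  filter_upwards [h, hfg.eventually_nhdsSet] with y hy hy'
  exact hy.congr_of_eventuallyEq hy'

lemma union (h₁ : HolNear f Q) (h₂ : HolNear f R) : HolNear f (Q ∪ R) :=
  Filter.Eventually.union h₁ h₂

lemma add (hf : HolNear f Q) (hg : HolNear g Q) : HolNear (f + g) Q := by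
  filter_upwards [hf, hg] with y h₁ h₂ using h₁.add h₂

lemma sub (hf : HolNear f Q) (hg : HolNear g Q) : HolNear (f - g) Q := by
  filter_upwards [hf, hg] with y h₁ h₂ using h₁.sub h₂

lemma mul {f g : E → ℂ} (hf : HolNear f Q) (hg : HolNear g Q) : HolNear (f * g) Q := by
  filter_upwards [hf, hg] with y h₁ h₂ using h₁.mul h₂

lemma div {f g : E → ℂ} (hf : HolNear f Q) (hg : HolNear g Q) (hg₀ : ∀ x ∈ Q, g x ≠ 0) :
    HolNear (f / g) Q := by
  have hne : ∀ᶠ y in 𝓝ˢ Q, g y ≠ 0 := eventually_nhdsSet_iff_forall.2 fun x hx =>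
    (hg.self_of_nhdsSet x hx).continuousAt.eventually_ne (hg₀ x hx)
  filter_upwards [hf, hg, hne] with y h₁ h₂ h₃
  simpa only [div_eq_mul_inv] using h₁.mul (h₂.inv h₃)

lemma of_differentiable (hf : Differentiable ℂ f) : HolNear f Q :=
  Eventually.of_forall fun y => hf y

lemma of_differentiableOn {U : Set E} (hU : IsOpen U) (hf : DifferentiableOn ℂ f U)
    (hQ : Q ⊆ U) : HolNear f Q := by
  filter_upwards [hU.mem_nhdsSet.2 hQ] with y hy using hf.differentiableAt (hU.mem_nhds hy)

lemma differentiableAt (h : HolNear f Q) {x : E} (hx : x ∈ Q) : DifferentiableAt ℂ f x :=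
  h.self_of_nhdsSet x hx

lemma continuousOn (h : HolNear f Q) : ContinuousOn f Q := fun _ hx =>
  (h.differentiableAt hx).continuousAt.continuousWithinAt

lemma tendsto_nhdsSet (h : HolNear f Q) {R : Set F} (hm : MapsTo f Q R) :
    Tendsto f (𝓝ˢ Q) (𝓝ˢ R) := fun _ hs =>
  mem_nhdsSet_iff_forall.2 fun _ hx =>
    (h.differentiableAt hx).continuousAt (mem_nhdsSet_iff_forall.1 hs _ (hm hx))

lemma comp {k : F → G} {R : Set F} (hk : HolNear k R) (hf : HolNear f Q) (hm : MapsTo f Q R) :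
    HolNear (k ∘ f) Q := by
  filter_upwards [hf, (hf.tendsto_nhdsSet hm).eventually hk] with y h₁ h₂
  exact h₂.comp y h₁

end HolNear

end HolNear

lemma exists_eventuallyEq_nhdsSet_of_isCompact {X Y : Type*} [TopologicalSpace X] [T2Space X]
    {A B : Set X} (hA : IsCompact A) (hB : IsCompact B) {f g : X → Y}
    (h : f =ᶠ[𝓝ˢ (A ∩ B)] g) : ∃ k : X → Y, k =ᶠ[𝓝ˢ A] f ∧ k =ᶠ[𝓝ˢ B] g := by
  classical
  rw [EventuallyEq, hA.nhdsSet_inter_eq hB, Filter.eventually_inf] at h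
  obtain ⟨s, hs, t, ht, hst⟩ := h
  refine ⟨s.piecewise f g, ?_, ?_⟩
  · filter_upwards [hs] with x hx using piecewise_eq_of_mem _ _ _ hx
  · filter_upwards [ht] with x hxt
    by_cases hxs : x ∈ s
    · rw [piecewise_eq_of_mem _ _ _ hxs, hst x ⟨hxs, hxt⟩]
    · rw [piecewise_eq_of_notMem _ _ _ hxs]

/-! ### Integrals depending holomorphically on a parameter -/

lemma eventually_nhdsSet_forall_mem_of_prod {X Y : Type*} [TopologicalSpace X]
    [TopologicalSpace Y] {K : Set X} (hK : IsCompact K) {Q : Set Y} {P : X × Y → Prop}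
    (hP : ∀ᶠ p in 𝓝ˢ (K ×ˢ Q), P p) : ∀ᶠ y in 𝓝ˢ Q, ∀ x ∈ K, P (x, y) :=
  eventually_nhdsSet_iff_forall.2 fun y hy =>
    hK.eventually_forall_of_forall_eventually fun x hx =>
      continuous_swap.continuousAt.eventually (eventually_nhdsSet_iff_forall.1 hP (x, y) ⟨hx, hy⟩)

section ParametricIntegral

variable {E F : Type*} [NormedAddCommGroup E] [NormedSpace ℂ E]
  [NormedAddCommGroup F] [NormedSpace ℂ F]

lemma norm_fderiv_le_of_forall_norm_le {f : E → F} {z : E} {r C : ℝ} (hr : 0 < r)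
    (hf : DifferentiableOn ℂ f (ball z r)) (hC : ∀ y ∈ ball z r, ‖f y‖ ≤ C) :
    ‖fderiv ℂ f z‖ ≤ 2 * C / r := by
  refine Complex.norm_fderiv_le_div_of_mapsTo_ball hf (fun y hy => ?_) hr
  rw [mem_closedBall, dist_eq_norm, two_mul]
  exact (norm_sub_le _ _).trans (add_le_add (hC y hy) (hC z (mem_ball_self hr)))

lemma norm_image_sub_le_of_differentiableOn_ball {f : E → F} {x y z : E} {r C : ℝ} (hr : 0 < r)
    (hf : DifferentiableOn ℂ f (ball x (2 * r))) (hC : ∀ y ∈ ball x (2 * r), ‖f y‖ ≤ C)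
    (hy : y ∈ ball x r) (hz : z ∈ ball x r) : ‖f z - f y‖ ≤ 2 * C / r * ‖z - y‖ := by
  have hsub : ∀ w ∈ ball x r, ball w r ⊆ ball x (2 * r) := fun w hw =>
    ball_subset_ball' (by linarith [mem_ball.1 hw])
  refine (convex_ball x r).norm_image_sub_le_of_norm_fderiv_le (𝕜 := ℂ) (fun w hw => ?_)
    (fun w hw => ?_) hy hz
  · exact hf.differentiableAt (isOpen_ball.mem_nhds (hsub w hw (mem_ball_self hr)))
  · exact norm_fderiv_le_of_forall_norm_le hr (hf.mono (hsub w hw)) fun v hv => hC v (hsub w hw hv)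

-- The Cauchy estimate at `x` for `w ↦ f (w + (y - x)) - f w`, which is bounded by `L * ‖y - x‖`.
lemma norm_fderiv_sub_fderiv_le {f : E → F} {x y : E} {r L : ℝ} (hr : 0 < r)
    (hf : DifferentiableOn ℂ f (ball x (2 * r)))
    (hL : ∀ w ∈ ball x (2 * r), ∀ z ∈ ball x (2 * r), ‖f z - f w‖ ≤ L * ‖z - w‖)
    (hy : y ∈ ball x r) : ‖fderiv ℂ f y - fderiv ℂ f x‖ ≤ 2 * (L * ‖y - x‖) / r := by
  have hsub : ball x r ⊆ ball x (2 * r) := ball_subset_ball (by linarith)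
  have hshift : ∀ w ∈ ball x r, w + (y - x) ∈ ball x (2 * r) := fun w hw => by
    rw [mem_ball, dist_eq_norm] at hw hy ⊢
    rw [add_sub_right_comm]
    linarith [norm_add_le (w - x) (y - x)]
  have hd : ∀ w ∈ ball x (2 * r), DifferentiableAt ℂ f w := fun w hw =>
    hf.differentiableAt (isOpen_ball.mem_nhds hw)
  have hd' : ∀ w ∈ ball x r, DifferentiableAt ℂ (fun w => f (w + (y - x))) w := fun w hw =>
    (hd _ (hshift w hw)).comp w (by fun_prop)
  have hx := mem_ball_self (x := x) hr
  have hfd : fderiv ℂ (fun w => f (w + (y - x)) - f w) x = fderiv ℂ f y - fderiv ℂ f x := by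
    rw [fderiv_fun_sub (hd' x hx) (hd x (hsub hx)), fderiv_comp_add_right, add_sub_cancel]
  rw [← hfd]
  refine norm_fderiv_le_of_forall_norm_le hr (fun w hw =>
    ((hd' w hw).sub (hd w (hsub hw))).differentiableWithinAt) fun w hw => ?_
  simpa using hL w (hsub hw) _ (hshift w hw)

lemma continuousAt_fderiv_of_eventually_differentiableAt {f : E → F} {x : E}
    (hf : ∀ᶠ y in 𝓝 x, DifferentiableAt ℂ f y) : ContinuousAt (fderiv ℂ f) x := by
  have hbdd : ∀ᶠ y in 𝓝 x, ‖f y‖ ≤ ‖f x‖ + 1 :=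
    hf.self_of_nhds.continuousAt.norm.eventually_le_const (lt_add_one _)
  obtain ⟨ρ, hρ, hball⟩ := Metric.eventually_nhds_iff_ball.1 (hf.and hbdd)
  obtain ⟨r, hr, rfl⟩ : ∃ r > 0, 2 * (2 * r) = ρ := ⟨ρ / 4, by positivity, by ring⟩
  have hd : DifferentiableOn ℂ f (ball x (2 * (2 * r))) := fun y hy =>
    (hball y hy).1.differentiableWithinAt
  have hlip := fun y hy z hz => norm_image_sub_le_of_differentiableOn_ball (y := y) (z := z)
    (by positivity) hd (fun w hw => (hball w hw).2) hy hz
  rw [ContinuousAt, tendsto_iff_norm_sub_tendsto_zero]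
  refine squeeze_zero' (Eventually.of_forall fun _ => norm_nonneg _)
    (eventually_of_mem (ball_mem_nhds x hr) fun y hy => norm_fderiv_sub_fderiv_le hr
      (hd.mono (ball_subset_ball (by linarith))) hlip hy) ?_
  have : Continuous fun y => 2 * (2 * (‖f x‖ + 1) / (2 * r) * ‖y - x‖) / r := by fun_prop
  simpa using this.tendsto x

lemma HolNear.continuousOn_fderiv {f : E → F} {Q : Set E} (hf : HolNear f Q) :
    ContinuousOn (fderiv ℂ f) Q := fun x hx =>
  (continuousAt_fderiv_of_eventually_differentiableAt
    (eventually_nhdsSet_iff_forall.1 hf x hx)).continuousWithinAt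

namespace HolNear

variable {H : ℂ × E → F} {γ : ℝ → ℂ} {a b : ℝ} {Q : Set E} {z₀ : E}

lemma exists_eventually_norm_fderiv_le {K : Set ℂ} (hK : IsCompact K)
    (hH : HolNear H (K ×ˢ {z₀})) :
    ∃ C, ∀ᶠ z in 𝓝 z₀, ∀ ξ ∈ K,
      DifferentiableAt ℂ H (ξ, z) ∧ ‖fderiv ℂ H (ξ, z)‖ ≤ C := by
  obtain ⟨C, hC⟩ :=
    (hK.prod isCompact_singleton).exists_bound_of_continuousOn hH.continuousOn_fderiv
  have hbound : ∀ᶠ p in 𝓝ˢ (K ×ˢ {z₀}), ‖fderiv ℂ H p‖ ≤ C + 1 :=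
    eventually_nhdsSet_iff_forall.2 fun p hp =>
      (continuousAt_fderiv_of_eventually_differentiableAt
        (eventually_nhdsSet_iff_forall.1 hH p hp)).norm.eventually_le_const
        ((hC p hp).trans_lt (lt_add_one C))
  refine ⟨C + 1, ?_⟩
  simpa only [nhdsSet_singleton] using
    eventually_nhdsSet_forall_mem_of_prod hK (hH.and hbound)

lemma differentiableAt_intervalIntegral (hγ : Continuous γ)
    (hH : HolNear H ((γ '' uIcc a b) ×ˢ {z₀})) :
    DifferentiableAt ℂ (fun z => ∫ t in a..b, H (γ t, z)) z₀ := by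
  obtain ⟨C, hC⟩ := exists_eventually_norm_fderiv_le (isCompact_uIcc.image hγ) hH
  simp only [forall_mem_image] at hC
  have hcont : ∀ᶠ z in 𝓝 z₀, ContinuousOn (fun t => H (γ t, z)) (uIcc a b) := by
    filter_upwards [hC] with z hz t ht
    exact ((hz ht).1.continuousAt.comp (f := fun t => (γ t, z))
      (by fun_prop)).continuousWithinAt
  have hcont' : ContinuousOn (fun t => (fderiv ℂ H (γ t, z₀)).comp (.inr ℂ ℂ E)) (uIcc a b) :=
    (hH.continuousOn_fderiv.comp (f := fun t => (γ t, z₀)) (by fun_prop)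
      fun t ht => ⟨mem_image_of_mem γ ht, rfl⟩).clm_comp continuousOn_const
  obtain ⟨s, hs, hsC⟩ := hC.exists_mem
  refine (intervalIntegral.hasFDerivAt_integral_of_dominated_of_fderiv_le
    (F := fun z t => H (γ t, z)) (F' := fun z t => (fderiv ℂ H (γ t, z)).comp (.inr ℂ ℂ E))
    (bound := fun _ => C) hs ?_ ?_ ?_ ?_ (by simp) ?_).differentiableAt
  · filter_upwards [hcont] with z hz
    exact (hz.mono uIoc_subset_uIcc).aestronglyMeasurable measurableSet_uIoc
  · exact hcont.self_of_nhds.intervalIntegrable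
  · exact (hcont'.mono uIoc_subset_uIcc).aestronglyMeasurable measurableSet_uIoc
  · refine Eventually.of_forall fun t ht z hz => ?_
    refine (ContinuousLinearMap.opNorm_comp_le _ _).trans ?_
    exact (mul_le_of_le_one_right (norm_nonneg _) (ContinuousLinearMap.norm_inr_le_one ℂ ℂ E)).trans
      (hsC z hz (uIoc_subset_uIcc ht)).2
  · refine Eventually.of_forall fun t ht z hz => ?_
    exact (hsC z hz (uIoc_subset_uIcc ht)).1.hasFDerivAt.comp z (hasFDerivAt_prodMk_right _ _)

lemma intervalIntegral (hγ : Continuous γ) (hH : HolNear H ((γ '' uIcc a b) ×ˢ Q)) :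
    HolNear (fun z => ∫ t in a..b, H (γ t, z)) Q := by
  filter_upwards [eventually_nhdsSet_forall_mem_of_prod (isCompact_uIcc.image hγ)
    hH.eventually_nhdsSet] with z hz
  refine differentiableAt_intervalIntegral hγ (eventually_nhdsSet_iff_forall.2 ?_)
  rintro ⟨ξ, _⟩ ⟨hξ, rfl⟩
  exact hz ξ hξ

end HolNear

end ParametricIntegral

/-! ### The Cauchy formula on rectangles and the splitting of germs along a hyperplane -/

section Rectangle

open Complex

/-- The integral of `f` over the positively oriented boundary of `[x₀, x₁] × [y₀, y₁]`. -/
def rectIntegral (f : ℂ → ℂ) (x₀ x₁ y₀ y₁ : ℝ) : ℂ :=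
  (∫ x : ℝ in x₀..x₁, f (x + y₀ * I)) - (∫ x : ℝ in x₀..x₁, f (x + y₁ * I)) +
    I * (∫ y : ℝ in y₀..y₁, f (x₁ + y * I)) - I * (∫ y : ℝ in y₀..y₁, f (x₀ + y * I))

lemma horizontal_mem_reProdIm_diff {s t : Set ℝ} {x y : ℝ} {w : ℂ} (hx : x ∈ s) (hy : y ∈ t)
    (hw : y ≠ w.im) : (x + y * I : ℂ) ∈ (s ×ℂ t) \ {w} := by
  refine ⟨by simp [mem_reProdIm, hx, hy], ?_⟩
  rintro rfl
  simp at hw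

lemma vertical_mem_reProdIm_diff {s t : Set ℝ} {x y : ℝ} {w : ℂ} (hx : x ∈ s) (hy : y ∈ t)
    (hw : x ≠ w.re) : (x + y * I : ℂ) ∈ (s ×ℂ t) \ {w} := by
  refine ⟨by simp [mem_reProdIm, hx, hy], ?_⟩
  rintro rfl
  simp at hw

lemma intervalIntegral_add_const_mul {f g h : ℂ → ℂ} {S : Set ℂ} (hf : ContinuousOn f S)
    (hg : ContinuousOn g S) {c : ℂ} (hh : ∀ ξ ∈ S, h ξ = f ξ + c * g ξ) {γ : ℝ → ℂ}
    (hγ : Continuous γ) {a b : ℝ} (hS : ∀ t ∈ uIcc a b, γ t ∈ S) :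
    ∫ t in a..b, h (γ t) = (∫ t in a..b, f (γ t)) + c * ∫ t in a..b, g (γ t) := by
  rw [intervalIntegral.integral_congr fun t ht => hh _ (hS t ht),
    intervalIntegral.integral_add, intervalIntegral.integral_const_mul]
  · exact (hf.comp hγ.continuousOn hS).intervalIntegrable
  · exact (continuousOn_const.mul (hg.comp hγ.continuousOn hS)).intervalIntegrable

lemma rectIntegral_add_const_mul {f g h : ℂ → ℂ} {x₀ x₁ y₀ y₁ : ℝ} {w c : ℂ}
    (hw : w ∈ Ioo x₀ x₁ ×ℂ Ioo y₀ y₁)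
    (hf : ContinuousOn f ((Icc x₀ x₁ ×ℂ Icc y₀ y₁) \ {w}))
    (hg : ContinuousOn g ((Icc x₀ x₁ ×ℂ Icc y₀ y₁) \ {w}))
    (hh : ∀ ξ ∈ (Icc x₀ x₁ ×ℂ Icc y₀ y₁) \ {w}, h ξ = f ξ + c * g ξ) :
    rectIntegral h x₀ x₁ y₀ y₁ =
      rectIntegral f x₀ x₁ y₀ y₁ + c * rectIntegral g x₀ x₁ y₀ y₁ := by
  obtain ⟨⟨h₁, h₂⟩, h₃, h₄⟩ := hw
  have hx : x₀ ≤ x₁ := (h₁.trans h₂).le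
  have hy : y₀ ≤ y₁ := (h₃.trans h₄).le
  have hor : ∀ y ∈ Icc y₀ y₁, y ≠ w.im → ∫ x : ℝ in x₀..x₁, h (x + y * I) =
      (∫ x : ℝ in x₀..x₁, f (x + y * I)) + c * ∫ x : ℝ in x₀..x₁, g (x + y * I) :=
    fun y hy' hne => intervalIntegral_add_const_mul hf hg hh (by fun_prop) fun x hx' =>
      horizontal_mem_reProdIm_diff (by rwa [uIcc_of_le hx] at hx') hy' hne
  have ver : ∀ x ∈ Icc x₀ x₁, x ≠ w.re → ∫ y : ℝ in y₀..y₁, h (x + y * I) =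
      (∫ y : ℝ in y₀..y₁, f (x + y * I)) + c * ∫ y : ℝ in y₀..y₁, g (x + y * I) :=
    fun x hx' hne => intervalIntegral_add_const_mul hf hg hh (by fun_prop) fun y hy' =>
      vertical_mem_reProdIm_diff hx' (by rwa [uIcc_of_le hy] at hy') hne
  unfold rectIntegral
  rw [hor y₀ (left_mem_Icc.2 hy) h₃.ne, hor y₁ (right_mem_Icc.2 hy) h₄.ne',
    ver x₁ (right_mem_Icc.2 hx) h₂.ne', ver x₀ (left_mem_Icc.2 hx) h₁.ne]
  ring

lemma log_I_mul {a : ℂ} (hre : 0 < a.re) (him : a.im < 0) :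
    log (I * a) = log a + Real.pi / 2 * I := by
  have ha : a ≠ 0 := fun h => by simp [h] at hre
  have harg := abs_lt.1 (abs_arg_lt_pi_div_two_iff.2 (Or.inl hre))
  have hneg : arg a < 0 := arg_neg_iff.2 him
  rw [(log_mul_eq_add_log_iff I_ne_zero ha).2, log_I, add_comm]
  rw [arg_I, mem_Ioc]
  constructor <;> linarith [Real.pi_pos]

-- `log (u * ·)` is a primitive of the inverse on the half plane `0 < re (u * ·)`.
lemma intervalIntegral_inv_eq_log_sub_log {u v w : ℂ} {γ : ℝ → ℂ} (hγ : ∀ t, HasDerivAt γ v t)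
    {a b : ℝ} (h : ∀ t ∈ uIcc a b, 0 < (u * (γ t - w)).re) :
    v * (∫ t : ℝ in a..b, (γ t - w)⁻¹) = log (u * (γ b - w)) - log (u * (γ a - w)) := by
  have hne : ∀ t ∈ uIcc a b, u * (γ t - w) ≠ 0 := fun t ht h₀ => by
    simpa only [h₀, zero_re, lt_self_iff_false] using h t ht
  have hderiv : ∀ t ∈ uIcc a b, HasDerivAt (fun t : ℝ => log (u * (γ t - w)))
      (v * (γ t - w)⁻¹) t := fun t ht => by
    have := left_ne_zero_of_mul (hne t ht)
    have := right_ne_zero_of_mul (hne t ht)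
    convert (((hγ t).sub_const w).const_mul u).clog_real (Or.inl (h t ht)) using 1
    field_simp
  have hγc : Continuous γ := continuous_iff_continuousAt.2 fun t => (hγ t).continuousAt
  rw [← intervalIntegral.integral_const_mul]
  exact intervalIntegral.integral_eq_sub_of_hasDerivAt hderiv
    (continuousOn_const.mul (ContinuousOn.inv₀ (by fun_prop)
      fun t ht => right_ne_zero_of_mul (hne t ht))).intervalIntegrable

-- On each edge one of the branches `log (u * ·)`, `u = I, 1, -I, -1`, is a primitive, and the
-- consecutive branches differ by `π / 2 * I` at the corners.
lemma rectIntegral_inv {x₀ x₁ y₀ y₁ : ℝ} {w : ℂ} (hw : w ∈ Ioo x₀ x₁ ×ℂ Ioo y₀ y₁) :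
    rectIntegral (fun ξ => (ξ - w)⁻¹) x₀ x₁ y₀ y₁ = 2 * Real.pi * I := by
  obtain ⟨⟨h₁, h₂⟩, h₃, h₄⟩ := hw
  have hor : ∀ y t : ℝ, HasDerivAt (fun x : ℝ => (x : ℂ) + y * I) 1 t := fun y t =>
    ofRealCLM.hasDerivAt.add_const _
  have ver : ∀ x t : ℝ, HasDerivAt (fun y : ℝ => (x : ℂ) + y * I) I t := fun x t => by
    simpa using (ofRealCLM.hasDerivAt.mul_const I).const_add (x : ℂ)
  have bottom := intervalIntegral_inv_eq_log_sub_log (u := I) (w := w) (a := x₀) (b := x₁)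
    (hor y₀) (fun t _ => by simp; linarith)
  have top := intervalIntegral_inv_eq_log_sub_log (u := -I) (w := w) (a := x₀) (b := x₁)
    (hor y₁) (fun t _ => by simp; linarith)
  have right := intervalIntegral_inv_eq_log_sub_log (u := 1) (w := w) (a := y₀) (b := y₁)
    (ver x₁) (fun t _ => by simp; linarith)
  have left := intervalIntegral_inv_eq_log_sub_log (u := -1) (w := w) (a := y₀) (b := y₁)
    (ver x₀) (fun t _ => by simp; linarith)
  have corner₁ := log_I_mul (a := x₁ + y₀ * I - w) (by simp; linarith) (by simp; linarith)
  have corner₂ := log_I_mul (a := -I * (x₁ + y₁ * I - w)) (by simp; linarith) (by simp; linarith)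
  have corner₃ := log_I_mul (a := -1 * (x₀ + y₁ * I - w)) (by simp; linarith) (by simp; linarith)
  have corner₄ := log_I_mul (a := I * (x₀ + y₀ * I - w)) (by simp; linarith) (by simp; linarith)
  rw [show I * (-I * (x₁ + y₁ * I - w)) = x₁ + y₁ * I - w by
    linear_combination -(x₁ + y₁ * I - w) * I_mul_I] at corner₂
  rw [show I * (-1 * (x₀ + y₁ * I - w)) = -I * (x₀ + y₁ * I - w) by ring] at corner₃
  rw [show I * (I * (x₀ + y₀ * I - w)) = -1 * (x₀ + y₀ * I - w) by
    linear_combination (x₀ + y₀ * I - w) * I_mul_I] at corner₄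
  simp only [one_mul] at bottom top right left
  unfold rectIntegral
  linear_combination bottom - top + right - left + corner₁ + corner₂ + corner₃ + corner₄

lemma continuousOn_dslope_reProdIm {f : ℂ → ℂ} {x₀ x₁ y₀ y₁ : ℝ} {w : ℂ}
    (hw : w ∈ Ioo x₀ x₁ ×ℂ Ioo y₀ y₁)
    (hf : ∀ ξ ∈ Icc x₀ x₁ ×ℂ Icc y₀ y₁, DifferentiableAt ℂ f ξ) :
    ContinuousOn (dslope f w) (Icc x₀ x₁ ×ℂ Icc y₀ y₁) := by
  have hsub : Ioo x₀ x₁ ×ℂ Ioo y₀ y₁ ⊆ Icc x₀ x₁ ×ℂ Icc y₀ y₁ :=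
    reProdIm_subset_iff.2 (prod_mono Ioo_subset_Icc_self Ioo_subset_Icc_self)
  exact (continuousOn_dslope (mem_of_superset ((isOpen_Ioo.reProdIm isOpen_Ioo).mem_nhds hw)
    hsub)).2 ⟨fun ξ hξ => (hf ξ hξ).continuousAt.continuousWithinAt, hf w (hsub hw)⟩

lemma rectIntegral_dslope {f : ℂ → ℂ} {x₀ x₁ y₀ y₁ : ℝ} {w : ℂ}
    (hw : w ∈ Ioo x₀ x₁ ×ℂ Ioo y₀ y₁)
    (hf : ∀ ξ ∈ Icc x₀ x₁ ×ℂ Icc y₀ y₁, DifferentiableAt ℂ f ξ) :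
    rectIntegral (dslope f w) x₀ x₁ y₀ y₁ = 0 := by
  have hx : x₀ ≤ x₁ := (hw.1.1.trans hw.1.2).le
  have hy : y₀ ≤ y₁ := (hw.2.1.trans hw.2.2).le
  refine integral_boundary_rect_eq_zero_of_differentiable_on_off_countable (dslope f w)
    ⟨x₀, y₀⟩ ⟨x₁, y₁⟩ {w} (countable_singleton w) ?_ fun ξ hξ => ?_
  · simpa only [uIcc_of_le hx, uIcc_of_le hy] using continuousOn_dslope_reProdIm hw hf
  · simp only [min_eq_left hx, max_eq_right hx, min_eq_left hy, max_eq_right hy] at hξ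
    exact (differentiableAt_dslope_of_ne hξ.2).2
      (hf ξ ⟨Ioo_subset_Icc_self hξ.1.1, Ioo_subset_Icc_self hξ.1.2⟩)

lemma rectIntegral_div_sub {f : ℂ → ℂ} {x₀ x₁ y₀ y₁ : ℝ} {w : ℂ}
    (hw : w ∈ Ioo x₀ x₁ ×ℂ Ioo y₀ y₁)
    (hf : ∀ ξ ∈ Icc x₀ x₁ ×ℂ Icc y₀ y₁, DifferentiableAt ℂ f ξ) :
    rectIntegral (fun ξ => f ξ / (ξ - w)) x₀ x₁ y₀ y₁ = 2 * Real.pi * I * f w := by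
  have hinv : ContinuousOn (fun ξ => (ξ - w)⁻¹) ((Icc x₀ x₁ ×ℂ Icc y₀ y₁) \ {w}) :=
    ContinuousOn.inv₀ (by fun_prop) fun ξ hξ => sub_ne_zero.2 hξ.2
  rw [rectIntegral_add_const_mul (c := f w) hw
    ((continuousOn_dslope_reProdIm hw hf).mono sdiff_subset) hinv, rectIntegral_dslope hw hf,
    rectIntegral_inv hw]
  · ring
  · intro ξ hξ
    have hne : ξ - w ≠ 0 := sub_ne_zero.2 hξ.2
    rw [dslope_of_ne _ hξ.2, slope_def_field]
    field_simp
    ring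

end Rectangle

section Split

open Complex

lemma exists_mem_Icc_abs_sub_le {a b x δ : ℝ} (hab : a ≤ b) (hδ : 0 ≤ δ)
    (hx : x ∈ Icc (a - δ) (b + δ)) : ∃ y ∈ Icc a b, |x - y| ≤ δ := by
  obtain ⟨h₁, h₂⟩ := hx
  rcases le_total x a with ha | ha
  · exact ⟨a, left_mem_Icc.2 hab, abs_le.2 ⟨by linarith, by linarith⟩⟩
  rcases le_total b x with hb | hb
  · exact ⟨b, right_mem_Icc.2 hab, abs_le.2 ⟨by linarith, by linarith⟩⟩
  · exact ⟨x, ⟨ha, hb⟩, by rwa [sub_self, abs_zero]⟩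

lemma exists_pos_Icc_reProdIm_subset {a b α β : ℝ} (hab : a ≤ b) (hαβ : α ≤ β) {U : Set ℂ}
    (hU : IsOpen U) (h : Icc a b ×ℂ Icc α β ⊆ U) :
    ∃ δ > 0, Icc (a - δ) (b + δ) ×ℂ Icc (α - δ) (β + δ) ⊆ U := by
  obtain ⟨ε, hε, hεU⟩ :=
    (isCompact_Icc.reProdIm isCompact_Icc).exists_cthickening_subset_open hU h
  refine ⟨ε / 2, half_pos hε, fun ξ hξ => hεU ?_⟩
  obtain ⟨x, hx, hdx⟩ := exists_mem_Icc_abs_sub_le hab (half_pos hε).le hξ.1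
  obtain ⟨y, hy, hdy⟩ := exists_mem_Icc_abs_sub_le hαβ (half_pos hε).le hξ.2
  refine mem_cthickening_of_dist_le ξ (⟨x, y⟩ : ℂ) _ _ ⟨hx, hy⟩ ?_
  rw [dist_eq_norm]
  refine (norm_le_abs_re_add_abs_im _).trans ?_
  rw [sub_re, sub_im]
  linarith

variable {E : Type*} [NormedAddCommGroup E] [NormedSpace ℂ E]

/-- `(A, B)` is a Cousin pair: the additive Cousin problem is solvable on it, that is, every germ
of a holomorphic function along `A ∩ B` is a difference of germs along `A` and along `B`. -/
def IsCousinPair (A B : Set E) : Prop :=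
  ∀ g : E → ℂ, HolNear g (A ∩ B) →
    ∃ g₁ g₂ : E → ℂ, HolNear g₁ A ∧ HolNear g₂ B ∧ g₁ - g₂ =ᶠ[𝓝ˢ (A ∩ B)] g

lemma HolNear.exists_pos_thicken_reProdIm {G : ℂ × E → ℂ} {a b α β : ℝ} (hab : a ≤ b)
    (hαβ : α ≤ β) {B : Set E} (hB : IsCompact B)
    (hG : HolNear G ((Icc a b ×ℂ Icc α β) ×ˢ B)) :
    ∃ δ > 0, HolNear G ((Icc (a - δ) (b + δ) ×ℂ Icc (α - δ) (β + δ)) ×ˢ B) := by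
  obtain ⟨V, hV, hBV, hGV⟩ := eventually_nhdsSet_iff_exists.1 hG
  obtain ⟨U, W, hU, -, hRU, hBW, hUW⟩ :=
    generalized_tube_lemma (isCompact_Icc.reProdIm isCompact_Icc) hB hV hBV
  obtain ⟨δ, hδ, hδU⟩ := exists_pos_Icc_reProdIm_subset hab hαβ hU hRU
  exact ⟨δ, hδ, of_differentiableOn hV (fun p hp => (hGV p hp).differentiableWithinAt)
    ((prod_mono hδU hBW).trans hUW)⟩

variable {ℓ : E →L[ℂ] ℂ} {G : ℂ × E → ℂ} {Q : Set E}

lemma HolNear.intervalIntegral_div_sub {R : Set ℂ} (hG : HolNear G (R ×ˢ Q)) {γ : ℝ → ℂ}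
    (hγ : Continuous γ) {a b : ℝ} (h : ∀ t ∈ uIcc a b, ∀ z ∈ Q, γ t ∈ R \ {ℓ z}) :
    HolNear (fun z => ∫ t in a..b, G (γ t, z) / (γ t - ℓ z)) Q := by
  refine HolNear.intervalIntegral (H := fun p => G p / (p.1 - ℓ p.2)) hγ (HolNear.div (hG.mono ?_)
    (HolNear.of_differentiable (by fun_prop)) ?_)
  · rintro ⟨_, z⟩ ⟨⟨t, ht, rfl⟩, hz⟩
    exact ⟨(h t ht z hz).1, hz⟩
  · rintro ⟨_, z⟩ ⟨⟨t, ht, rfl⟩, hz⟩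
    exact sub_ne_zero.2 (h t ht z hz).2

section

variable {x₀ x₁ y₀ y₁ : ℝ} (hG : HolNear G ((Icc x₀ x₁ ×ℂ Icc y₀ y₁) ×ˢ Q))
include hG

lemma HolNear.integral_horizontal_div_sub (hx : x₀ ≤ x₁) {y : ℝ} (hy : y ∈ Icc y₀ y₁)
    (hQ : ∀ z ∈ Q, y ≠ (ℓ z).im) :
    HolNear (fun z => ∫ x : ℝ in x₀..x₁, G (x + y * I, z) / (x + y * I - ℓ z)) Q :=
  hG.intervalIntegral_div_sub (by fun_prop) fun x hx' z hz =>
    horizontal_mem_reProdIm_diff (by rwa [uIcc_of_le hx] at hx') hy (hQ z hz)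

lemma HolNear.integral_vertical_div_sub (hy : y₀ ≤ y₁) {x : ℝ} (hx : x ∈ Icc x₀ x₁)
    (hQ : ∀ z ∈ Q, x ≠ (ℓ z).re) :
    HolNear (fun z => ∫ y : ℝ in y₀..y₁, G (x + y * I, z) / (x + y * I - ℓ z)) Q :=
  hG.intervalIntegral_div_sub (by fun_prop) fun y hy' z hz =>
    vertical_mem_reProdIm_diff hx (by rwa [uIcc_of_le hy] at hy') (hQ z hz)

lemma HolNear.eventually_rectIntegral_div_sub
    (hQ : ∀ z ∈ Q, ℓ z ∈ Ioo x₀ x₁ ×ℂ Ioo y₀ y₁) :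
    ∀ᶠ z in 𝓝ˢ Q, rectIntegral (fun ξ => G (ξ, z) / (ξ - ℓ z)) x₀ x₁ y₀ y₁ =
      2 * Real.pi * I * G (ℓ z, z) := by
  have hmem : ∀ᶠ z in 𝓝ˢ Q, ℓ z ∈ Ioo x₀ x₁ ×ℂ Ioo y₀ y₁ :=
    ((isOpen_Ioo.reProdIm isOpen_Ioo).preimage ℓ.continuous).mem_nhdsSet.2 hQ
  filter_upwards [hmem, eventually_nhdsSet_forall_mem_of_prod
    (isCompact_Icc.reProdIm isCompact_Icc) hG] with z hz hGz
  exact rectIntegral_div_sub hz fun ξ hξ => (hGz ξ hξ).comp ξ (by fun_prop)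

end

-- The Cauchy integral over the boundary of a thin rectangle around `c + [α, β] * I`: the left
-- edge contributes `g₂` and the other three edges contribute `g₁`.
lemma HolNear.exists_split_of_prod {B : Set E} (hB : IsCompact B) {c α β : ℝ}
    (him : ∀ z ∈ B, (ℓ z).im ∈ Icc α β) (hG : HolNear G (({c} ×ℂ Icc α β) ×ˢ B)) :
    ∃ g₁ g₂ : E → ℂ, HolNear g₁ (B ∩ {z | (ℓ z).re ≤ c}) ∧
      HolNear g₂ (B ∩ {z | c ≤ (ℓ z).re}) ∧
      g₁ - g₂ =ᶠ[𝓝ˢ (B ∩ {z | (ℓ z).re = c})] fun z => G (ℓ z, z) := by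
  rcases B.eq_empty_or_nonempty with rfl | ⟨b, hb⟩
  · exact ⟨0, 0, by simp [HolNear], by simp [HolNear], by simp [EventuallyEq]⟩
  have hαβ : α ≤ β := (him b hb).1.trans (him b hb).2
  rw [← Icc_self] at hG
  obtain ⟨δ, hδ, hGδ⟩ := hG.exists_pos_thicken_reProdIm le_rfl hαβ hB
  have hGB (s : Set E) :
      HolNear G ((Icc (c - δ) (c + δ) ×ℂ Icc (α - δ) (β + δ)) ×ˢ (B ∩ s)) :=
    hGδ.mono (prod_mono_right inter_subset_left)
  have hx : c - δ ≤ c + δ := by linarith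
  have hy : α - δ ≤ β + δ := by linarith
  let hor (y : ℝ) (z : E) : ℂ :=
    ∫ x : ℝ in (c - δ)..(c + δ), G (x + y * I, z) / (x + y * I - ℓ z)
  let ver (x : ℝ) (z : E) : ℂ :=
    ∫ y : ℝ in (α - δ)..(β + δ), G (x + y * I, z) / (x + y * I - ℓ z)
  have hconst (a : ℂ) {s : Set E} : HolNear (fun _ => a) s :=
    of_differentiable (differentiable_const a)
  refine ⟨fun z => (2 * Real.pi * I)⁻¹ * (hor (α - δ) z - hor (β + δ) z + I * ver (c + δ) z),
    fun z => (2 * Real.pi * I)⁻¹ * (I * ver (c - δ) z), ?_, ?_, ?_⟩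
  · have bottom : HolNear (hor (α - δ)) (B ∩ {z | (ℓ z).re ≤ c}) :=
      (hGB _).integral_horizontal_div_sub hx (left_mem_Icc.2 hy)
        fun z hz => by linarith [(him z hz.1).1]
    have top : HolNear (hor (β + δ)) (B ∩ {z | (ℓ z).re ≤ c}) :=
      (hGB _).integral_horizontal_div_sub hx (right_mem_Icc.2 hy)
        fun z hz => by linarith [(him z hz.1).2]
    have right : HolNear (ver (c + δ)) (B ∩ {z | (ℓ z).re ≤ c}) :=
      (hGB _).integral_vertical_div_sub hy (right_mem_Icc.2 hx)
        fun z hz => by linarith [hz.2.out]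
    exact (hconst _).mul ((bottom.sub top).add ((hconst I).mul right))
  · have left : HolNear (ver (c - δ)) (B ∩ {z | c ≤ (ℓ z).re}) :=
      (hGB _).integral_vertical_div_sub hy (left_mem_Icc.2 hx)
        fun z hz => by linarith [hz.2.out]
    exact (hconst _).mul ((hconst I).mul left)
  · have hint (z) (hz : z ∈ B ∩ {z | (ℓ z).re = c}) :
        ℓ z ∈ Ioo (c - δ) (c + δ) ×ℂ Ioo (α - δ) (β + δ) := by
      have hre : (ℓ z).re = c := hz.2
      obtain ⟨hα, hβ⟩ := him z hz.1
      exact ⟨⟨by linarith, by linarith⟩, ⟨by linarith, by linarith⟩⟩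
    filter_upwards [(hGB _).eventually_rectIntegral_div_sub hint] with z hz
    rw [← inv_mul_cancel_left₀ two_pi_I_ne_zero (G (ℓ z, z)), ← hz, Pi.sub_apply, ← mul_sub]
    rfl

lemma inter_le_inter_inter_ge {α : Type*} (B : Set α) (r : α → ℝ) (c : ℝ) :
    (B ∩ {z | r z ≤ c}) ∩ (B ∩ {z | c ≤ r z}) = B ∩ {z | r z = c} := by
  ext z
  simp only [mem_inter_iff, mem_ofPred_eq, le_antisymm_iff]
  tauto

lemma isCousinPair_inter_re_le_inter_le_re {B : Set E} (hB : IsCompact B) {c α β : ℝ}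
    (him : ∀ z ∈ B, (ℓ z).im ∈ Icc α β) {e : E} (he : ℓ e = 1)
    (hσ : ∀ z ∈ B, ∀ y ∈ Icc α β, z + ((c + y * I : ℂ) - ℓ z) • e ∈ B) :
    IsCousinPair (B ∩ {z | (ℓ z).re ≤ c}) (B ∩ {z | c ≤ (ℓ z).re}) := by
  intro g hg
  rw [inter_le_inter_inter_ge B (fun z => (ℓ z).re)] at hg ⊢
  let σ (p : ℂ × E) : E := p.2 + (p.1 - ℓ p.2) • e
  have hσB : MapsTo σ (({c} ×ℂ Icc α β) ×ˢ B) (B ∩ {z | (ℓ z).re = c}) := by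
    rintro ⟨ξ, z⟩ ⟨⟨hre, hy⟩, hz⟩
    obtain rfl : ξ.re = c := hre
    refine ⟨by simpa only [re_add_im] using hσ z hz ξ.im hy, ?_⟩
    simp [σ, he]
  have hG : HolNear (g ∘ σ) (({c} ×ℂ Icc α β) ×ˢ B) :=
    hg.comp (HolNear.of_differentiable (by fun_prop)) hσB
  simpa [σ] using HolNear.exists_split_of_prod hB him hG

end Split

/-! ### Cousin problems and Oka's extension theorem on polyhedra -/

section PrincipalPart

variable {E : Type*} [NormedAddCommGroup E] [NormedSpace ℂ E] {A B Z : Set E} {m q h : E → ℂ}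

/-- The first Cousin problem on `A` with poles along `Z` is solvable for the principal part `m`:
some function is holomorphic near `A \ Z` and differs from `m` by a holomorphic function near
`A ∩ Z`. -/
def HasPrincipalPart (m : E → ℂ) (Z A : Set E) : Prop :=
  ∃ u : E → ℂ, HolNear u (A \ Z) ∧ HolNear (u - m) (A ∩ Z)

lemma HasPrincipalPart.mono (hB : HasPrincipalPart m Z B) (hAB : A ⊆ B) :
    HasPrincipalPart m Z A := by
  obtain ⟨u, hu, hum⟩ := hB
  exact ⟨u, hu.mono (sdiff_subset_sdiff_left hAB), hum.mono (inter_subset_inter_left Z hAB)⟩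

lemma HasPrincipalPart.union (hA : IsCompact A) (hB : IsCompact B) (hAB : IsCousinPair A B)
    (h₁ : HasPrincipalPart m Z A) (h₂ : HasPrincipalPart m Z B) :
    HasPrincipalPart m Z (A ∪ B) := by
  obtain ⟨u₁, hu₁, hum₁⟩ := h₁
  obtain ⟨u₂, hu₂, hum₂⟩ := h₂
  have hdiff : HolNear (u₁ - u₂) (A ∩ B) := by
    have off := (hu₁.mono (sdiff_subset_sdiff_left inter_subset_left)).sub
      (hu₂.mono (sdiff_subset_sdiff_left (inter_subset_right (s := A))))
    have on := (hum₁.mono (inter_subset_inter_left Z inter_subset_left)).sub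
      (hum₂.mono (inter_subset_inter_left Z (inter_subset_right (s := A))))
    rw [sub_sub_sub_cancel_right] at on
    simpa only [sdiff_union_inter] using off.union on
  obtain ⟨g₁, g₂, hg₁, hg₂, hg⟩ := hAB _ hdiff
  obtain ⟨u, huA, huB⟩ := exists_eventuallyEq_nhdsSet_of_isCompact hA hB
    (f := u₁ - g₁) (g := u₂ - g₂) <| by
      filter_upwards [hg] with z hz
      simp only [Pi.sub_apply] at hz ⊢
      linear_combination -hz
  have off {S : Set E} {v g : E → ℂ} (hv : HolNear v (S \ Z)) (hg : HolNear g S)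
      (hu : u =ᶠ[𝓝ˢ S] v - g) : HolNear u (S \ Z) :=
    (hv.sub (hg.mono sdiff_subset)).congr (hu.filter_mono (nhdsSet_mono sdiff_subset))
  have on {S : Set E} {v g : E → ℂ} (hv : HolNear (v - m) (S ∩ Z)) (hg : HolNear g S)
      (hu : u =ᶠ[𝓝ˢ S] v - g) : HolNear (u - m) (S ∩ Z) := by
    refine (hv.sub (hg.mono inter_subset_left)).congr ?_
    filter_upwards [hu.filter_mono (nhdsSet_mono inter_subset_left)] with z hz
    simp only [Pi.sub_apply] at hz ⊢
    rw [hz, sub_right_comm]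
  refine ⟨u, ?_, ?_⟩
  · rw [union_sdiff_distrib]
    exact (off hu₁ hg₁ huA).union (off hu₂ hg₂ huB)
  · rw [union_inter_distrib_right]
    exact (on hum₁ hg₁ huA).union (on hum₂ hg₂ huB)

lemma exists_mem_nhds_hasPrincipalPart_div {D : Set E} (hq : HolNear q D)
    (hh : HolNear h (D ∩ {y | q y = 0})) {x : E} (hx : x ∈ D) :
    ∃ U, IsOpen U ∧ x ∈ U ∧ HasPrincipalPart (h / q) {y | q y = 0} U := by
  by_cases hqx : q x = 0
  · obtain ⟨U, hU, hUo, hxU⟩ := _root_.eventually_nhds_iff.1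
      ((eventually_nhdsSet_iff_forall.1 hh x ⟨hx, hqx⟩).and
        (eventually_nhdsSet_iff_forall.1 hq x hx))
    refine ⟨U, hUo, hxU, h / q, ?_, ?_⟩
    · have hol {f : E → ℂ} (hf : ∀ y ∈ U, DifferentiableAt ℂ f y) :
          HolNear f (U \ {y | q y = 0}) :=
        .of_differentiableOn hUo (fun y hy => (hf y hy).differentiableWithinAt) sdiff_subset
      exact (hol fun y hy => (hU y hy).1).div (hol fun y hy => (hU y hy).2) fun y hy => hy.2
    · rw [sub_self]
      exact .of_differentiable (differentiable_const _)
  · obtain ⟨U, hU, hUo, hxU⟩ := _root_.eventually_nhds_iff.1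
      ((hq.differentiableAt hx).continuousAt.eventually_ne hqx)
    refine ⟨U, hUo, hxU, 0, .of_differentiable (differentiable_const _), ?_⟩
    rw [(disjoint_left.2 hU : Disjoint U {y | q y = 0}).inter_eq]
    simp [HolNear]

lemma HasPrincipalPart.exists_extension {D : Set E} (hq : HolNear q D)
    (hh : HolNear h (D ∩ {y | q y = 0})) (H : HasPrincipalPart (h / q) {y | q y = 0} D) :
    ∃ F : E → ℂ, HolNear F D ∧ ∀ y, q y = 0 → F y = h y := by
  obtain ⟨u, hu, hum⟩ := H
  refine ⟨q * (u - h / q) + h, ?_, fun y hy => by simp [hy]⟩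
  rw [← sdiff_union_inter D {y | q y = 0}]
  refine HolNear.union ?_ (((hq.mono inter_subset_left).mul hum).add hh)
  refine ((hq.mono sdiff_subset).mul hu).congr (eventually_nhdsSet_iff_forall.2 fun x hx => ?_)
  filter_upwards [(hq.differentiableAt hx.1).continuousAt.eventually_ne hx.2] with y hy
  simp only [Pi.add_apply, Pi.mul_apply, Pi.sub_apply, Pi.div_apply, mul_sub,
    mul_div_cancel₀ _ hy, sub_add_cancel]

end PrincipalPart

lemma cut_induction {α κ : Type*} [Finite κ] {r : κ → α → ℝ} {P : Set α → Prop} {δ : ℝ}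
    (hδ : 0 < δ) (small : ∀ A, (∀ k, ∀ x ∈ A, ∀ y ∈ A, |r k x - r k y| ≤ δ) → P A)
    (glue : ∀ A k c, P (A ∩ {x | r k x ≤ c}) → P (A ∩ {x | c ≤ r k x}) → P A)
    {A : Set α} (hA : ∀ k, Bornology.IsBounded (r k '' A)) : P A := by
  classical
  have := Fintype.ofFinite κ
  have main (N : κ → ℕ) : ∀ (a : κ → ℝ) (A : Set α),
      (∀ k, ∀ x ∈ A, r k x ∈ Icc (a k) (a k + N k * δ)) → P A := by
    induction hs : ∑ k, N k using Nat.strong_induction_on generalizing N with | _ s ih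
    intro a A hAN
    by_cases! hN : ∀ k, N k ≤ 1
    · refine small A fun k x hx y hy => (abs_sub_le_of_le_of_le (hAN k x hx).1 (hAN k x hx).2
        (hAN k y hy).1 (hAN k y hy).2).trans ?_
      rw [add_sub_cancel_left]
      exact mul_le_of_le_one_left hδ.le (mod_cast hN k)
    obtain ⟨k, hk⟩ := hN
    have hlt {M : ℕ} (hM : M < N k) : ∑ j, Function.update N k M j < s := by
      rw [← hs]
      refine Finset.sum_lt_sum (fun j _ => ?_) ⟨k, Finset.mem_univ k, by simpa using hM⟩
      exact update_le_iff.2 ⟨hM.le, fun _ _ => le_rfl⟩ j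
    have hcast : ((N k - 1 : ℕ) : ℝ) = N k - 1 := Nat.cast_pred (by omega)
    refine glue A k (a k + δ) ?_ ?_
    · refine ih _ (hlt hk) _ rfl a _ fun j x hx => ?_
      rcases eq_or_ne j k with rfl | hj
      · simpa using ⟨(hAN j x hx.1).1, hx.2.out⟩
      · simpa [hj] using hAN j x hx.1
    · refine ih _ (hlt (M := N k - 1) (by omega)) _ rfl (Function.update a k (a k + δ)) _
        fun j x hx => ?_
      rcases eq_or_ne j k with rfl | hj
      · rw [Function.update_self, Function.update_self, hcast]
        exact ⟨hx.2, by linarith [(hAN j x hx.1).2]⟩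
      · simpa [hj] using hAN j x hx.1
  choose R hR using fun k => (isBounded_iff_forall_norm_le.1 (hA k))
  simp only [forall_mem_image, Real.norm_eq_abs, abs_le] at hR
  refine main (fun k => ⌈2 * R k / δ⌉₊) (-R) A fun k x hx => ⟨(hR k hx).1, ?_⟩
  have := (div_le_iff₀ hδ).1 (Nat.le_ceil (2 * R k / δ))
  rw [Pi.neg_apply]
  linarith [(hR k hx).2]

section Polyhedra

open Complex

variable {n : ℕ}

/-- The coordinate `z i`, rotated to `-I * z i` for the index `(i, true)`. -/
def rotCoord (κ : Fin n × Bool) : (Fin n → ℂ) →L[ℂ] ℂ :=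
  (bif κ.2 then -I else 1) • ContinuousLinearMap.proj κ.1

/-- The real coordinates of `z`: the real part of `z i` for `(i, false)` and its imaginary part for
`(i, true)`. -/
def realCoord (κ : Fin n × Bool) (z : Fin n → ℂ) : ℝ := (rotCoord κ z).re

/-- The closed box in `ℂⁿ` cut out by bounds on the real coordinates. -/
def box (lo hi : Fin n × Bool → ℝ) : Set (Fin n → ℂ) :=
  {z | ∀ κ, realCoord κ z ∈ Icc (lo κ) (hi κ)}

@[simp] lemma realCoord_false (i : Fin n) (z : Fin n → ℂ) : realCoord (i, false) z = (z i).re := by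
  simp [realCoord, rotCoord]

@[simp] lemma realCoord_true (i : Fin n) (z : Fin n → ℂ) : realCoord (i, true) z = (z i).im := by
  simp [realCoord, rotCoord]

lemma continuous_realCoord (κ : Fin n × Bool) : Continuous (realCoord κ) :=
  continuous_re.comp (rotCoord κ).continuous

lemma dist_lt_of_forall_abs_realCoord_sub_le {z w : Fin n → ℂ} {δ : ℝ} (hδ : 0 < δ)
    (h : ∀ κ, |realCoord κ z - realCoord κ w| ≤ δ / 3) : dist z w < δ := by
  refine (dist_pi_lt_iff hδ).2 fun i => ?_
  have hre := h (i, false)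
  have him := h (i, true)
  rw [realCoord_false, realCoord_false, ← sub_re] at hre
  rw [realCoord_true, realCoord_true, ← sub_im] at him
  rw [dist_eq_norm]
  linarith [norm_le_abs_re_add_abs_im (z i - w i)]

lemma box_eq_pi (lo hi : Fin n × Bool → ℝ) : box lo hi = univ.pi fun i =>
    Icc (lo (i, false)) (hi (i, false)) ×ℂ Icc (lo (i, true)) (hi (i, true)) := by
  ext z
  simp only [box, mem_ofPred_eq, Prod.forall, Bool.forall_bool, realCoord_false, realCoord_true,
    mem_univ_pi, mem_reProdIm]

lemma isCompact_box (lo hi : Fin n × Bool → ℝ) : IsCompact (box lo hi) := by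
  rw [box_eq_pi]
  exact isCompact_univ_pi fun i => isCompact_Icc.reProdIm isCompact_Icc

lemma box_inter_realCoord_le (lo hi : Fin n × Bool → ℝ) (κ : Fin n × Bool) (c : ℝ) :
    box lo hi ∩ {z | realCoord κ z ≤ c} = box lo (Function.update hi κ (min (hi κ) c)) := by
  ext z
  simp only [box, mem_Icc, mem_inter_iff, mem_ofPred_eq, Function.update_apply]
  grind

lemma box_inter_le_realCoord (lo hi : Fin n × Bool → ℝ) (κ : Fin n × Bool) (c : ℝ) :
    box lo hi ∩ {z | c ≤ realCoord κ z} = box (Function.update lo κ (max (lo κ) c)) hi := by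
  ext z
  simp only [box, mem_Icc, mem_inter_iff, mem_ofPred_eq, Function.update_apply]
  grind

lemma update_mem_box {lo hi : Fin n × Bool → ℝ} {z : Fin n → ℂ} (hz : z ∈ box lo hi) {i : Fin n}
    {w : ℂ} (hw : w ∈ Icc (lo (i, false)) (hi (i, false)) ×ℂ Icc (lo (i, true)) (hi (i, true))) :
    Function.update z i w ∈ box lo hi := by
  rw [box_eq_pi] at hz ⊢
  exact update_mem_pi_iff_of_mem hz |>.2 fun _ => hw

lemma add_smul_single_eq_update (i : Fin n) (b : Bool) (a : ℂ) (z : Fin n → ℂ) :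
    z + (a - rotCoord (i, b) z) • Pi.single i (bif b then I else 1) =
      Function.update z i (a * bif b then I else 1) := by
  ext j
  rcases eq_or_ne j i with rfl | hj
  · cases b
    · simp [rotCoord]
    · simp only [rotCoord, Pi.add_apply, Pi.smul_apply, Pi.single_eq_same, Function.update_self,
        cond_true, FunLike.coe_smul, ContinuousLinearMap.proj_apply, smul_eq_mul]
      linear_combination z j * I_mul_I
  · simp [hj]

lemma isCousinPair_box (lo hi : Fin n × Bool → ℝ) (κ : Fin n × Bool) (c : ℝ) :
    IsCousinPair (box lo hi ∩ {z | realCoord κ z ≤ c}) (box lo hi ∩ {z | c ≤ realCoord κ z}) := by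
  rcases (box lo hi ∩ {z | realCoord κ z = c}).eq_empty_or_nonempty with hc | ⟨s, hs, rfl⟩
  · intro g _
    rw [inter_le_inter_inter_ge, hc]
    exact ⟨0, 0, .of_differentiable (differentiable_const _),
      .of_differentiable (differentiable_const _), by simp [EventuallyEq]⟩
  obtain ⟨i, b⟩ := κ
  have hre := hs (i, false)
  have him := hs (i, true)
  rw [realCoord_false] at hre
  rw [realCoord_true] at him
  cases b
  · refine isCousinPair_inter_re_le_inter_le_re (isCompact_box lo hi) (α := lo (i, true))
      (β := hi (i, true)) (e := Pi.single i 1) ?_ (by simp [rotCoord]) fun z hz y hy => ?_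
    · intro z hz
      simpa [rotCoord] using hz (i, true)
    · refine (add_smul_single_eq_update i false _ z).symm ▸ update_mem_box hz ⟨?_, ?_⟩
      · simpa using hre
      · simpa using hy
  · refine isCousinPair_inter_re_le_inter_le_re (isCompact_box lo hi) (α := -hi (i, false))
      (β := -lo (i, false)) (e := Pi.single i I) ?_ (by simp [rotCoord]) fun z hz y hy => ?_
    · intro z hz
      have := hz (i, false)
      simpa [rotCoord, and_comm] using this
    · refine (add_smul_single_eq_update i true _ z).symm ▸ update_mem_box hz ⟨?_, ?_⟩
      · simpa [le_neg, neg_le, and_comm] using hy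
      · simpa using him

/-- The closed square of side `2` centred at `0` in `ℂ`. -/
def unitSquare : Set ℂ := Icc (-1) 1 ×ℂ Icc (-1) 1

/-- Analytic polyhedra of order `m`: boxes successively cut down by `m` conditions
`p z ∈ unitSquare`, with `p` holomorphic near the previous polyhedron. -/
inductive IsPolyhedron : ℕ → Set (Fin n → ℂ) → Prop
  | base (lo hi : Fin n × Bool → ℝ) : IsPolyhedron 0 (box lo hi)
  | cut {m : ℕ} {Q : Set (Fin n → ℂ)} {p : (Fin n → ℂ) → ℂ} (hQ : IsPolyhedron m Q)
      (hp : HolNear p Q) : IsPolyhedron (m + 1) (Q ∩ p ⁻¹' unitSquare)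

/-- The cylinder over `Q` with base `unitSquare` in the zeroth coordinate. -/
def cyl (Q : Set (Fin n → ℂ)) : Set (Fin (n + 1) → ℂ) :=
  {y | y 0 ∈ unitSquare ∧ Fin.tail y ∈ Q}

/-- The graph embedding `z ↦ (p z, z)`. -/
def graphMap (p : (Fin n → ℂ) → ℂ) (z : Fin n → ℂ) : Fin (n + 1) → ℂ := Fin.cons (p z) z

lemma differentiable_finTail : Differentiable ℂ (Fin.tail : (Fin (n + 1) → ℂ) → Fin n → ℂ) :=
  differentiable_pi.2 fun i => differentiable_apply i.succ

namespace IsPolyhedron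

variable {m : ℕ} {Q : Set (Fin n → ℂ)}

lemma isCompact (hQ : IsPolyhedron m Q) : IsCompact Q := by
  induction hQ with
  | base lo hi => exact isCompact_box lo hi
  | cut _ hp hQ =>
    exact hQ.of_isClosed_subset (hp.continuousOn.preimage_isClosed_of_isClosed hQ.isClosed
      (isClosed_Icc.reProdIm isClosed_Icc)) inter_subset_left

lemma inter {H : Set (Fin n → ℂ)}
    (hH : ∀ lo hi, ∃ lo' hi', box lo hi ∩ H = box lo' hi') (hQ : IsPolyhedron m Q) :
    IsPolyhedron m (Q ∩ H) := by
  induction hQ with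
  | base lo hi =>
    obtain ⟨lo', hi', h⟩ := hH lo hi
    exact h ▸ .base lo' hi'
  | cut _ hp hQ =>
    rw [inter_right_comm]
    exact hQ.cut (hp.mono inter_subset_left)

lemma inter_realCoord_le (hQ : IsPolyhedron m Q) (κ : Fin n × Bool) (c : ℝ) :
    IsPolyhedron m (Q ∩ {z | realCoord κ z ≤ c}) :=
  hQ.inter fun lo hi => ⟨_, _, box_inter_realCoord_le lo hi κ c⟩

lemma inter_le_realCoord (hQ : IsPolyhedron m Q) (κ : Fin n × Bool) (c : ℝ) :
    IsPolyhedron m (Q ∩ {z | c ≤ realCoord κ z}) :=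
  hQ.inter fun lo hi => ⟨_, _, box_inter_le_realCoord lo hi κ c⟩

lemma inter_realCoord_eq (hQ : IsPolyhedron m Q) (κ : Fin n × Bool) (c : ℝ) :
    IsPolyhedron m (Q ∩ {z | realCoord κ z = c}) := by
  rw [← inter_le_inter_inter_ge, ← inter_inter_distrib_left, ← inter_assoc]
  exact (hQ.inter_realCoord_le κ c).inter_le_realCoord κ c

lemma hasPrincipalPart_div (hS : ∀ Q' : Set (Fin n → ℂ), IsPolyhedron m Q' → ∀ κ c,
    IsCousinPair (Q' ∩ {z | realCoord κ z ≤ c}) (Q' ∩ {z | c ≤ realCoord κ z}))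
    (hQ : IsPolyhedron m Q) {q h : (Fin n → ℂ) → ℂ} (hq : HolNear q Q)
    (hh : HolNear h (Q ∩ {y | q y = 0})) : HasPrincipalPart (h / q) {y | q y = 0} Q := by
  choose! U hUo hxU hU using fun x hx => exists_mem_nhds_hasPrincipalPart_div hq hh (x := x) hx
  obtain ⟨δ, hδ, hball⟩ := lebesgue_number_lemma_of_metric hQ.isCompact
    (c := fun x : Q => U x) (fun x => hUo x x.2) fun x hx => mem_iUnion.2 ⟨⟨x, hx⟩, hxU x hx⟩
  refine cut_induction (r := realCoord) (P := fun A => A ⊆ Q → IsPolyhedron m A →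
    HasPrincipalPart (h / q) {y | q y = 0} A) (div_pos hδ three_pos) ?_ ?_ ?_ Subset.rfl hQ
  · intro A hA hAQ _
    rcases A.eq_empty_or_nonempty with rfl | ⟨x, hx⟩
    · exact ⟨0, by simp [HolNear], by simp [HolNear]⟩
    obtain ⟨y, hy⟩ := hball x (hAQ hx)
    exact (hU y y.2).mono fun z hz => hy (dist_lt_of_forall_abs_realCoord_sub_le hδ
      fun κ => hA κ z hz x hx)
  · intro A κ c h₁ h₂ hAQ hA
    have hle := hA.inter_realCoord_le κ c
    have hge := hA.inter_le_realCoord κ c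
    convert HasPrincipalPart.union hle.isCompact hge.isCompact (hS A hA κ c)
      (h₁ (inter_subset_left.trans hAQ) hle) (h₂ (inter_subset_left.trans hAQ) hge)
    rw [← inter_union_distrib_left, eq_comm, inter_eq_left]
    exact fun z _ => le_total (realCoord κ z) c
  · exact fun κ => (hQ.isCompact.image (continuous_realCoord κ)).isBounded

end IsPolyhedron

section Graph

variable {m : ℕ} {Q : Set (Fin n → ℂ)} {p f : (Fin n → ℂ) → ℂ}

lemma isPolyhedron_cyl (hQ : IsPolyhedron m Q) : IsPolyhedron m (cyl Q) := by
  induction hQ with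
  | base lo hi =>
    convert IsPolyhedron.base (fun κ => Fin.cases (-1) (fun i => lo (i, κ.2)) κ.1)
      (fun κ => Fin.cases 1 (fun i => hi (i, κ.2)) κ.1) using 1
    ext y
    simp only [cyl, box_eq_pi, mem_ofPred_eq, mem_univ_pi, Fin.forall_fin_succ]
    rfl
  | cut _ hp hQ =>
    convert hQ.cut (hp.comp (.of_differentiable differentiable_finTail) fun y hy => hy.2) using 1
    ext y
    exact and_assoc.symm

lemma holNear_graphMap (hp : HolNear p Q) : HolNear (graphMap p) Q := by
  filter_upwards [hp] with z hz
  exact differentiableAt_pi.2 (Fin.forall_fin_succ.2 ⟨hz, fun i => differentiableAt_apply i z⟩)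

lemma IsPolyhedron.exists_extension (hS : ∀ Q' : Set (Fin (n + 1) → ℂ), IsPolyhedron m Q' →
    ∀ κ c, IsCousinPair (Q' ∩ {z | realCoord κ z ≤ c}) (Q' ∩ {z | c ≤ realCoord κ z}))
    (hQ : IsPolyhedron m Q) (hp : HolNear p Q) (hf : HolNear f (Q ∩ p ⁻¹' unitSquare)) :
    ∃ F : (Fin (n + 1) → ℂ) → ℂ, HolNear F (cyl Q) ∧ F ∘ graphMap p = f := by
  have htail (S : Set (Fin (n + 1) → ℂ)) : HolNear Fin.tail S :=
    .of_differentiable differentiable_finTail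
  have hq : HolNear (fun y => y 0 - p (Fin.tail y)) (cyl Q) :=
    HolNear.sub (.of_differentiable (differentiable_apply 0)) (hp.comp (htail _) fun y hy => hy.2)
  have hh : HolNear (f ∘ Fin.tail) (cyl Q ∩ {y | y 0 - p (Fin.tail y) = 0}) :=
    hf.comp (htail _) fun y hy => ⟨hy.1.2, by
      rw [mem_preimage, ← sub_eq_zero.1 hy.2]
      exact hy.1.1⟩
  obtain ⟨F, hF, hFf⟩ :=
    ((isPolyhedron_cyl hQ).hasPrincipalPart_div hS hq hh).exists_extension hq hh
  exact ⟨F, hF, funext fun z => hFf _ (sub_eq_zero.2 rfl)⟩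

theorem IsPolyhedron.isCousinPair (hQ : IsPolyhedron m Q) (κ : Fin n × Bool) (c : ℝ) :
    IsCousinPair (Q ∩ {z | realCoord κ z ≤ c}) (Q ∩ {z | c ≤ realCoord κ z}) := by
  induction m generalizing n c with
  | zero =>
    cases hQ with | base lo hi => exact isCousinPair_box lo hi κ c
  | succ m ih =>
    cases hQ with | @cut _ Q p hQ hp =>
    intro g hg
    rw [inter_le_inter_inter_ge] at hg ⊢
    rw [inter_right_comm] at hg
    obtain ⟨G, hG, rfl⟩ := (hQ.inter_realCoord_eq κ c).exists_extension
      (fun _ hQ' => ih hQ') (hp.mono inter_subset_left) hg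
    have hcyl (S : Set ℝ) : cyl (Q ∩ {z | realCoord κ z ∈ S}) =
        cyl Q ∩ {y | realCoord (κ.1.succ, κ.2) y ∈ S} := by
      ext y
      exact and_assoc.symm
    obtain ⟨G₁, G₂, hG₁, hG₂, hGs⟩ := ih (isPolyhedron_cyl hQ) (κ.1.succ, κ.2) c G <| by
      rw [inter_le_inter_inter_ge]
      exact (congrArg (HolNear G) (hcyl {c})).mp hG
    rw [inter_le_inter_inter_ge] at hGs
    have hgr (S : Set ℝ) : HolNear (graphMap p) (Q ∩ p ⁻¹' unitSquare ∩ {z | realCoord κ z ∈ S}) :=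
      (holNear_graphMap hp).mono (inter_subset_left.trans inter_subset_left)
    have hmaps (S : Set ℝ) : MapsTo (graphMap p) (Q ∩ p ⁻¹' unitSquare ∩ {z | realCoord κ z ∈ S})
        (cyl Q ∩ {y | realCoord (κ.1.succ, κ.2) y ∈ S}) :=
      fun z hz => ⟨⟨hz.1.2, hz.1.1⟩, hz.2⟩
    exact ⟨G₁ ∘ graphMap p, G₂ ∘ graphMap p, hG₁.comp (hgr (Iic c)) (hmaps (Iic c)),
      hG₂.comp (hgr (Ici c)) (hmaps (Ici c)),
      ((hgr {c}).tendsto_nhdsSet (hmaps {c})).eventually hGs⟩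

end Graph

end Polyhedra

/-! ### Approximation by functions holomorphic on a larger set -/

section Approximation

variable {E : Type*} [NormedAddCommGroup E] [NormedSpace ℂ E] {Ω Z Q : Set E}

/-- `f` is a uniform limit on `Z` of functions holomorphic on `Ω`. -/
def Approximable (Ω Z : Set E) (f : E → ℂ) : Prop :=
  ∀ ε > 0, ∃ F, DifferentiableOn ℂ F Ω ∧ ∀ z ∈ Z, ‖f z - F z‖ < ε

namespace Approximable

variable {f g : E → ℂ}

lemma of_differentiableOn (hf : DifferentiableOn ℂ f Ω) : Approximable Ω Z f :=
  fun ε hε => ⟨f, hf, fun z _ => by simpa only [sub_self, norm_zero] using hε⟩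

lemma of_forall (h : ∀ ε > 0, ∃ g, Approximable Ω Z g ∧ ∀ z ∈ Z, ‖f z - g z‖ < ε) :
    Approximable Ω Z f := fun ε hε => by
  obtain ⟨g, hg, hfg⟩ := h (ε / 2) (half_pos hε)
  obtain ⟨F, hF, hFg⟩ := hg (ε / 2) (half_pos hε)
  refine ⟨F, hF, fun z hz => ?_⟩
  linarith [norm_sub_le_norm_sub_add_norm_sub (f z) (g z) (F z), hfg z hz, hFg z hz]

lemma congr (hf : Approximable Ω Z f) (h : EqOn g f Z) : Approximable Ω Z g :=
  of_forall fun ε hε => ⟨f, hf, fun z hz => by simpa only [h hz, sub_self, norm_zero] using hε⟩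

lemma add (hf : Approximable Ω Z f) (hg : Approximable Ω Z g) :
    Approximable Ω Z (f + g) := fun ε hε => by
  obtain ⟨F, hF, hFf⟩ := hf (ε / 2) (half_pos hε)
  obtain ⟨G, hG, hGg⟩ := hg (ε / 2) (half_pos hε)
  refine ⟨F + G, hF.add hG, fun z hz => ?_⟩
  rw [Pi.add_apply, Pi.add_apply, add_sub_add_comm]
  exact (norm_add_le _ _).trans_lt (by linarith [hFf z hz, hGg z hz])

lemma mul_differentiableOn (hf : Approximable Ω Z f) (hg : DifferentiableOn ℂ g Ω) {C : ℝ}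
    (hC : ∀ z ∈ Z, ‖g z‖ ≤ C) : Approximable Ω Z (f * g) := fun ε hε => by
  obtain ⟨F, hF, hFf⟩ := hf (ε / (|C| + 1)) (by positivity)
  refine ⟨F * g, hF.mul hg, fun z hz => ?_⟩
  have hgz : ‖g z‖ < |C| + 1 := by linarith [hC z hz, le_abs_self C]
  calc ‖f z * g z - F z * g z‖ = ‖f z - F z‖ * ‖g z‖ := by rw [← sub_mul, norm_mul]
    _ < ε / (|C| + 1) * (|C| + 1) :=
        mul_lt_mul'' (hFf z hz) hgz (norm_nonneg _) (norm_nonneg _)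
    _ = ε := div_mul_cancel₀ _ (by positivity)

lemma sum {ι : Type*} {s : ι → E → ℂ} {t : Finset ι} (hs : ∀ k ∈ t, Approximable Ω Z (s k)) :
    Approximable Ω Z (∑ k ∈ t, s k) :=
  Finset.sum_induction s _ (fun _ _ => add) (of_differentiableOn (differentiableOn_const 0)) hs

end Approximable

open scoped NNReal

lemma norm_cauchyPowerSeries_le_of_forall_norm_le {g : ℂ → ℂ} {r : ℝ≥0} (hr : 0 < r) {M : ℝ}
    (hM : ∀ s ∈ closedBall 0 (r : ℝ), ‖g s‖ ≤ M) (k : ℕ) :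
    ‖cauchyPowerSeries g 0 r k‖ ≤ M * (r : ℝ)⁻¹ ^ k := by
  refine (norm_cauchyPowerSeries_le g 0 r k).trans ?_
  rw [abs_of_pos (NNReal.coe_pos.2 hr)]
  gcongr
  rw [inv_mul_le_iff₀' Real.two_pi_pos]
  have h := intervalIntegral.norm_integral_le_of_norm_le_const (a := 0) (b := 2 * Real.pi)
    (f := fun θ => ‖g (circleMap 0 r θ)‖) (C := M) fun θ _ => by
      rw [norm_norm]
      exact hM _ (circleMap_mem_closedBall _ r.coe_nonneg _)
  rw [sub_zero, abs_of_pos Real.two_pi_pos] at h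
  exact (Real.le_norm_self _).trans h

lemma norm_sub_sum_coeff_cauchyPowerSeries_le {g : ℂ → ℂ} {r : ℝ≥0} (hr : 0 < r)
    (hg : DifferentiableOn ℂ g (closedBall 0 r)) {M : ℝ}
    (hM : ∀ s ∈ closedBall 0 (r : ℝ), ‖g s‖ ≤ M) {w : ℂ} (hw : ‖w‖ ≤ r / 2) (N : ℕ) :
    ‖g w - ∑ k ∈ Finset.range N, (cauchyPowerSeries g 0 r).coeff k * w ^ k‖ ≤
      2 * M * (1 / 2) ^ N := by
  have hr' : (0 : ℝ) < r := NNReal.coe_pos.2 hr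
  have hM₀ : 0 ≤ M := (norm_nonneg _).trans (hM 0 (mem_closedBall_self hr'.le))
  have hsum : HasSum (fun k => (cauchyPowerSeries g 0 r).coeff k * w ^ k) (g w) := by
    have h := (hg.hasFPowerSeriesOnBall hr).hasSum_sub (y := w) (by
      rw [Metric.eball_coe, mem_ball_zero_iff]
      exact hw.trans_lt (half_lt_self hr'))
    simpa only [sub_zero, FormalMultilinearSeries.apply_eq_pow_smul_coeff, smul_eq_mul,
      mul_comm] using h
  have hterm (k : ℕ) : ‖(cauchyPowerSeries g 0 r).coeff k * w ^ k‖ ≤ M * (1 / 2) ^ k := by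
    rw [norm_mul, norm_pow, ← FormalMultilinearSeries.norm_apply_eq_norm_coef]
    calc _ ≤ M * (r : ℝ)⁻¹ ^ k * (r / 2) ^ k := by
          gcongr
          exact norm_cauchyPowerSeries_le_of_forall_norm_le hr hM k
      _ = M * (1 / 2) ^ k := by
          rw [mul_assoc, ← mul_pow, ← mul_div_assoc, inv_mul_cancel₀ hr'.ne']
  rw [norm_sub_rev]
  refine (norm_sub_le_of_geometric_bound_of_hasSum (by norm_num) hterm hsum N).trans_eq ?_
  ring

lemma HolNear.coeff_cauchyPowerSeries {G : ℂ × E → ℂ} {r : ℝ≥0} (hr : 0 < r)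
    (hG : HolNear G (closedBall 0 r ×ˢ Q)) (k : ℕ) :
    HolNear (fun z => (cauchyPowerSeries (fun s => G (s, z)) 0 r).coeff k) Q := by
  have hr' : (r : ℝ) ≠ 0 := NNReal.coe_ne_zero.2 hr.ne'
  have hmem (θ : ℝ) : circleMap 0 r θ ∈ closedBall (0 : ℂ) r :=
    circleMap_mem_closedBall _ r.coe_nonneg θ
  have hγ : (circleMap 0 r '' uIcc 0 (2 * Real.pi)) ×ˢ Q ⊆ closedBall 0 r ×ˢ Q :=
    prod_mono_left (image_subset_iff.2 fun θ _ => hmem θ)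
  have hfst : Differentiable ℂ fun p : ℂ × E => (2 * Real.pi * p.1 ^ k : ℂ) := by fun_prop
  have hH : HolNear (G / fun p => (2 * Real.pi * p.1 ^ k : ℂ))
      ((circleMap 0 r '' uIcc 0 (2 * Real.pi)) ×ˢ Q) := by
    refine (hG.mono hγ).div (.of_differentiable hfst) ?_
    rintro ⟨_, z⟩ ⟨⟨θ, -, rfl⟩, -⟩
    simp [Real.pi_ne_zero, hr']
  refine (HolNear.intervalIntegral (continuous_circleMap 0 r) hH).congr (.of_eq ?_)
  ext z
  have hpow := cauchyPowerSeries_apply (fun s => G (s, z)) 0 r k 1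
  rw [FormalMultilinearSeries.apply_eq_pow_smul_coeff, one_pow, one_smul] at hpow
  rw [hpow, circleIntegral, ← intervalIntegral.integral_smul]
  refine intervalIntegral.integral_congr fun θ _ => ?_
  have hne : circleMap 0 r θ ≠ 0 := circleMap_ne_center (by simpa using hr')
  simp only [deriv_circleMap, sub_zero, smul_eq_mul, Pi.div_apply, one_div, inv_pow]
  field_simp

-- Expand `G (s, z)` in powers of `s` and substitute `s = q z`.
lemma Approximable.comp_prodMk {G : ℂ × E → ℂ} {q : E → ℂ} {r : ℝ} (hr : 0 < r) (hZ : IsCompact Z)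
    (hZQ : Z ⊆ Q) (hQ : ∀ c, HolNear c Q → Approximable Ω Z c) (hq : DifferentiableOn ℂ q Ω)
    (hqZ : ∀ z ∈ Z, ‖q z‖ ≤ r / 2) (hG : HolNear G (closedBall 0 r ×ˢ Q)) :
    Approximable Ω Z fun z => G (q z, z) := by
  lift r to ℝ≥0 using hr.le
  obtain ⟨M, hM⟩ := ((isCompact_closedBall (0 : ℂ) r).prod hZ).exists_bound_of_continuousOn
    (hG.mono (prod_mono_right hZQ)).continuousOn
  set a : ℕ → E → ℂ := fun k z => (cauchyPowerSeries (fun s => G (s, z)) 0 r).coeff k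
  refine .of_forall fun ε hε => ?_
  obtain ⟨N, hN⟩ : ∃ N : ℕ, 2 * M * (1 / 2) ^ N < ε :=
    (((tendsto_pow_atTop_nhds_zero_of_lt_one (by norm_num) (by norm_num)).const_mul
      (2 * M)).eventually_lt_const (by rwa [mul_zero])).exists
  refine ⟨∑ k ∈ Finset.range N, a k * q ^ k, .sum fun k _ => ?_, fun z hz => ?_⟩
  · refine (hQ _ (hG.coeff_cauchyPowerSeries hr k)).mul_differentiableOn (hq.pow k)
      (C := (r / 2) ^ k) fun z hz => ?_
    rw [Pi.pow_apply, norm_pow]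
    exact pow_le_pow_left₀ (norm_nonneg _) (hqZ z hz) k
  · have hGz : DifferentiableOn ℂ (fun s => G (s, z)) (closedBall 0 r) := fun s hs =>
      ((hG.differentiableAt (x := (s, z)) ⟨hs, hZQ hz⟩).comp s
        (differentiableAt_id.prodMk (differentiableAt_const z))).differentiableWithinAt
    rw [Finset.sum_apply]
    exact (norm_sub_sum_coeff_cauchyPowerSeries_le hr hGz (fun s hs => hM (s, z) ⟨hs, hz⟩)
      (hqZ z hz) N).trans_lt hN

end Approximation

section OkaPolyhedron

variable {n : ℕ} {Ω Z Q : Set (Fin n → ℂ)}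

lemma approximable_of_holNear_polydisc {ι : Type*} [Fintype ι] {Ω Z : Set (ι → ℂ)}
    (hZ : IsCompact Z) {R : ℝ} (hR : 0 < R) (hZR : ∀ z ∈ Z, ∀ i, ‖z i‖ ≤ R / 2) (T : Finset ι) :
    ∀ f, HolNear f {z | ∀ j ∈ T, ‖z j‖ ≤ R} → Approximable Ω Z f := by
  classical
  induction T using Finset.induction_on with
  | empty =>
    refine fun f hf => .of_differentiableOn fun z _ => ?_
    exact (hf.differentiableAt (by simp)).differentiableWithinAt
  | insert j T hj ih =>
    intro f hf
    have hupd : Differentiable ℂ fun p : ℂ × (ι → ℂ) => Function.update p.2 j p.1 := by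
      refine differentiable_pi.2 fun i => ?_
      rcases eq_or_ne i j with rfl | hij
      · simpa only [Function.update_self] using differentiable_fst
      · simp only [Function.update_of_ne hij]
        fun_prop
    have hZT : Z ⊆ {z | ∀ i ∈ T, ‖z i‖ ≤ R} := fun z hz i _ =>
      (hZR z hz i).trans (half_le_self hR.le)
    have hG : HolNear (f ∘ fun p : ℂ × (ι → ℂ) => Function.update p.2 j p.1)
        (closedBall 0 R ×ˢ {z | ∀ i ∈ T, ‖z i‖ ≤ R}) := by
      refine hf.comp (.of_differentiable hupd) fun p hp =>
        (Finset.forall_mem_insert _ _ _).2 ⟨?_, ?_⟩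
      · simpa using hp.1
      · intro i hi
        rw [Function.update_of_ne (ne_of_mem_of_not_mem hi hj)]
        exact hp.2 i hi
    refine (Approximable.comp_prodMk hR hZ hZT ih (differentiable_apply j).differentiableOn
      (fun z hz => hZR z hz j) hG).congr fun z _ => ?_
    simp only [Function.comp_apply, Function.update_eq_self]

/-- Polyhedra containing `Z`, with defining functions that are holomorphic on `Ω` and so small on
`Z` that their Taylor expansions converge there. -/
inductive IsOkaPolyhedron (Ω Z : Set (Fin n → ℂ)) : Set (Fin n → ℂ) → Prop
  | base {R : ℝ} (hR : 0 < R) (hZ : ∀ z ∈ Z, ∀ i, ‖z i‖ ≤ R / 2) :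
      IsOkaPolyhedron Ω Z (box (fun _ => -R) fun _ => R)
  | cut {Q : Set (Fin n → ℂ)} {p : (Fin n → ℂ) → ℂ} (hQ : IsOkaPolyhedron Ω Z Q)
      (hpΩ : DifferentiableOn ℂ p Ω) (hp : HolNear p Q) (hpZ : ∀ z ∈ Z, ‖p z‖ ≤ 1 / 2) :
      IsOkaPolyhedron Ω Z (Q ∩ p ⁻¹' unitSquare)

lemma abs_realCoord_le_norm (κ : Fin n × Bool) (z : Fin n → ℂ) : |realCoord κ z| ≤ ‖z κ.1‖ := by
  obtain ⟨i, _ | _⟩ := κ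
  · simpa only [realCoord_false] using Complex.abs_re_le_norm (z i)
  · simpa only [realCoord_true] using Complex.abs_im_le_norm (z i)

lemma mem_unitSquare_of_norm_le_one {w : ℂ} (hw : ‖w‖ ≤ 1) : w ∈ unitSquare :=
  ⟨abs_le.1 ((Complex.abs_re_le_norm w).trans hw), abs_le.1 ((Complex.abs_im_le_norm w).trans hw)⟩

lemma norm_lt_two_of_mem_unitSquare {w : ℂ} (hw : w ∈ unitSquare) : ‖w‖ < 2 := by
  obtain ⟨⟨hre₁, hre₂⟩, him₁, him₂⟩ := hw
  refine lt_of_pow_lt_pow_left₀ 2 two_pos.le ?_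
  rw [Complex.sq_norm, Complex.normSq_apply]
  nlinarith

namespace IsOkaPolyhedron

lemma exists_isPolyhedron (hQ : IsOkaPolyhedron Ω Z Q) : ∃ m, IsPolyhedron m Q := by
  induction hQ with
  | base => exact ⟨0, .base _ _⟩
  | cut _ _ hp _ ih => exact ih.imp' (· + 1) fun m hm => hm.cut hp

lemma subset (hQ : IsOkaPolyhedron Ω Z Q) : Z ⊆ Q := by
  induction hQ with
  | base hR hZ => exact fun z hz κ => abs_le.1 <|
      (abs_realCoord_le_norm κ z).trans <| (hZ z hz κ.1).trans (half_le_self hR.le)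
  | cut _ _ _ hpZ ih => exact fun z hz =>
      ⟨ih hz, mem_unitSquare_of_norm_le_one <| (hpZ z hz).trans one_half_lt_one.le⟩

theorem approximable (hQ : IsOkaPolyhedron Ω Z Q) (hZ : IsCompact Z) {f : (Fin n → ℂ) → ℂ}
    (hf : HolNear f Q) : Approximable Ω Z f := by
  induction hQ generalizing f with
  | base hR hZR =>
    refine approximable_of_holNear_polydisc hZ hR hZR Finset.univ f (hf.mono fun z hz κ => ?_)
    exact abs_le.1 ((abs_realCoord_le_norm κ z).trans (hz κ.1 (Finset.mem_univ _)))
  | @cut Q p hQ hpΩ hp hpZ ih =>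
    obtain ⟨m, hm⟩ := hQ.exists_isPolyhedron
    obtain ⟨F, hF, rfl⟩ := hm.exists_extension (fun _ h => h.isCousinPair) hp hf
    have hcons : Differentiable ℂ fun y : ℂ × (Fin n → ℂ) => (Fin.cons y.1 y.2 : Fin (n + 1) → ℂ) :=
      differentiable_pi.2 <| Fin.forall_fin_succ.2
        ⟨differentiable_fst, fun i => differentiable_pi.1 differentiable_snd i⟩
    have hG := hF.comp (HolNear.of_differentiable hcons (Q := closedBall 0 1 ×ˢ Q)) fun y hy =>
      ⟨mem_unitSquare_of_norm_le_one (mem_closedBall_zero_iff.1 hy.1), hy.2⟩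
    exact Approximable.comp_prodMk one_pos hZ hQ.subset (fun c hc => ih hc) hpΩ hpZ hG

lemma exists_subset_inter (hQ : IsOkaPolyhedron Ω Z Q) {W : Set (Fin n → ℂ)} (hW : IsOpen W)
    (hsep : ∀ b ∈ Q \ W, ∃ p : (Fin n → ℂ) → ℂ, DifferentiableOn ℂ p Ω ∧ HolNear p Q ∧
      (∀ z ∈ Z, ‖p z‖ ≤ 1 / 2) ∧ 2 ≤ ‖p b‖) :
    ∃ Q', IsOkaPolyhedron Ω Z Q' ∧ Q' ⊆ Q ∩ W := by
  obtain ⟨m, hm⟩ := hQ.exists_isPolyhedron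
  have hcover : ∀ R ⊆ Q, IsOkaPolyhedron Ω Z R →
      ∃ R' ⊆ R, IsOkaPolyhedron Ω Z R' ∧ Disjoint R' (Q \ W) := by
    refine (hm.isCompact.diff hW).induction_on (p := fun S => ∀ R ⊆ Q, IsOkaPolyhedron Ω Z R →
      ∃ R' ⊆ R, IsOkaPolyhedron Ω Z R' ∧ Disjoint R' S) ?_ ?_ ?_ ?_
    · exact fun R _ hR => ⟨R, Subset.rfl, hR, disjoint_empty R⟩
    · intro S T hST hT R hRQ hR
      obtain ⟨R', hR'R, hR', hd⟩ := hT R hRQ hR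
      exact ⟨R', hR'R, hR', hd.mono_right hST⟩
    · intro S T hS hT R hRQ hR
      obtain ⟨R₁, hR₁R, hR₁, hd₁⟩ := hS R hRQ hR
      obtain ⟨R₂, hR₂R₁, hR₂, hd₂⟩ := hT R₁ (hR₁R.trans hRQ) hR₁
      exact ⟨R₂, hR₂R₁.trans hR₁R, hR₂, disjoint_union_right.2 ⟨hd₁.mono_left hR₂R₁, hd₂⟩⟩
    · intro b hb
      obtain ⟨p, hpΩ, hpQ, hpZ, hpb⟩ := hsep b hb
      have hout : ∀ᶠ y in 𝓝 b, p y ∉ unitSquare :=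
        (hpQ.differentiableAt hb.1).continuousAt.eventually
          ((isClosed_Icc.reProdIm isClosed_Icc).isOpen_compl.mem_nhds fun h =>
            (norm_lt_two_of_mem_unitSquare h).not_ge hpb)
      refine ⟨{y | p y ∉ unitSquare}, mem_nhdsWithin_of_mem_nhds hout, fun R hRQ hR => ?_⟩
      exact ⟨_, inter_subset_left, hR.cut hpΩ (hpQ.mono hRQ) hpZ,
        disjoint_left.2 fun y hy hy' => hy' hy.2⟩
  obtain ⟨Q', hsub, hQ', hdisj⟩ := hcover Q Subset.rfl hQ
  exact ⟨Q', hQ', fun y hy => ⟨hsub hy, by_contra fun hyW => hdisj.le_bot ⟨hy, hsub hy, hyW⟩⟩⟩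

end IsOkaPolyhedron

end OkaPolyhedron

/-! ### Holomorphic hulls and the Oka–Weil theorem -/

section Hull

variable {E F : Type*} [NormedAddCommGroup E] [NormedSpace ℂ E] [NormedAddCommGroup F]
  [NormedSpace ℂ F] {Ω K L : Set E}

/-- The hull of `K` with respect to the functions holomorphic on `Ω`; for `Ω = univ` it is the
polynomially convex hull. -/
def holHull (Ω K : Set E) : Set E :=
  {x ∈ Ω | ∀ f : E → ℂ, DifferentiableOn ℂ f Ω → ‖f x‖ ≤ ⨆ y : K, ‖f ↑y‖}

lemma holHull_subset : holHull Ω K ⊆ Ω := fun _ h => h.1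

lemma norm_le_of_mem_holHull {x : E} (hx : x ∈ holHull Ω K) {f : E → ℂ}
    (hf : DifferentiableOn ℂ f Ω) {C : ℝ} (hC : 0 ≤ C) (hfC : ∀ z ∈ K, ‖f z‖ ≤ C) : ‖f x‖ ≤ C :=
  (hx.2 f hf).trans (Real.iSup_le (fun y => hfC y y.2) hC)

lemma norm_le_iSup_of_mem (hK : IsCompact K) (hKΩ : K ⊆ Ω) {f : E → ℂ}
    (hf : DifferentiableOn ℂ f Ω) {x : E} (hx : x ∈ K) : ‖f x‖ ≤ ⨆ y : K, ‖f ↑y‖ := by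
  have hbdd := (hK.image_of_continuousOn (hf.continuousOn.mono hKΩ).norm).bddAbove
  rw [image_eq_range] at hbdd
  exact le_ciSup hbdd ⟨x, hx⟩

lemma subset_holHull (hK : IsCompact K) (hKΩ : K ⊆ Ω) : K ⊆ holHull Ω K := fun _ hx =>
  ⟨hKΩ hx, fun _ hf => norm_le_iSup_of_mem hK hKΩ hf hx⟩

lemma norm_le_of_mem_holHull_of_approximable (hK : IsCompact K) (hKΩ : K ⊆ Ω)
    {f : E → ℂ} (hf : Approximable Ω (holHull Ω K) f) {x : E} (hx : x ∈ holHull Ω K)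
    {C : ℝ} (hC : 0 ≤ C) (hfC : ∀ z ∈ K, ‖f z‖ ≤ C) : ‖f x‖ ≤ C := by
  refine le_of_forall_pos_le_add fun ε hε => ?_
  obtain ⟨F, hF, hFf⟩ := hf (ε / 2) (half_pos hε)
  have hFx : ‖F x‖ ≤ C + ε / 2 := norm_le_of_mem_holHull hx hF (by positivity) fun z hz => by
    linarith [hfC z hz, hFf z (subset_holHull hK hKΩ hz), norm_sub_norm_le (F z) (f z),
      norm_sub_rev (F z) (f z)]
  linarith [hFf x hx, norm_sub_norm_le (f x) (F x)]

lemma holHull_mono (hL : IsCompact L) (hLΩ : L ⊆ Ω) (h : K ⊆ L) : holHull Ω K ⊆ holHull Ω L :=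
  fun _ hx => ⟨hx.1, fun _ hf => norm_le_of_mem_holHull hx hf
    (Real.iSup_nonneg fun _ => norm_nonneg _) fun _ hz => norm_le_iSup_of_mem hL hLΩ hf (h hz)⟩

lemma holHull_union_holHull_subset (hK : IsCompact K) (hKΩ : K ⊆ Ω) (hL : IsCompact L)
    (hLΩ : L ⊆ Ω) : holHull Ω K ∪ holHull Ω L ⊆ holHull Ω (K ∪ L) := union_subset
  (holHull_mono (hK.union hL) (union_subset hKΩ hLΩ) subset_union_left)
  (holHull_mono (hK.union hL) (union_subset hKΩ hLΩ) subset_union_right)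

lemma holHull_holHull_subset : holHull Ω (holHull Ω K) ⊆ holHull Ω K := fun _ hx =>
  ⟨hx.1, fun f hf => norm_le_of_mem_holHull hx hf (Real.iSup_nonneg fun _ => norm_nonneg _)
    fun _ hz => hz.2 f hf⟩

lemma mapsTo_holHull_image {f : E → F} {Ω' : Set F} (hf : DifferentiableOn ℂ f Ω)
    (hfΩ : MapsTo f Ω Ω') : MapsTo f (holHull Ω K) (holHull Ω' (f '' K)) := fun x hx => by
  refine ⟨hfΩ hx.1, fun g hg => (hx.2 (g ∘ f) (hg.comp hf hfΩ)).trans_eq ?_⟩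
  exact (surjective_mapsTo_image_restrict f K).iSup_comp fun y : f '' K => ‖g y‖

lemma exists_norm_le_half_two_le_of_notMem_holHull (hK : IsCompact K) (hKΩ : K ⊆ Ω) {x : E}
    (hx : x ∈ Ω) (hxK : x ∉ holHull Ω K) :
    ∃ p : E → ℂ, DifferentiableOn ℂ p Ω ∧ (∀ z ∈ K, ‖p z‖ ≤ 1 / 2) ∧ 2 ≤ ‖p x‖ := by
  obtain ⟨f, hf, hfx⟩ : ∃ f : E → ℂ, DifferentiableOn ℂ f Ω ∧ ⨆ y : K, ‖f ↑y‖ < ‖f x‖ := by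
    simpa only [holHull, mem_ofPred_eq, hx, true_and, not_forall, not_le, exists_prop] using hxK
  obtain ⟨D, hKD, hDx⟩ := exists_between hfx
  have hD : 0 < D := (Real.iSup_nonneg fun _ => norm_nonneg _).trans_lt hKD
  obtain ⟨N, hN⟩ := pow_unbounded_of_one_lt 4 ((one_lt_div hD).2 hDx)
  have hnorm (z : E) : ‖(1 / 2 : ℂ) * ((D : ℂ)⁻¹ * f z) ^ N‖ = 1 / 2 * (‖f z‖ / D) ^ N := by
    simp [abs_of_pos hD, div_eq_inv_mul]
  refine ⟨fun z => 1 / 2 * ((D : ℂ)⁻¹ * f z) ^ N, ((hf.const_mul _).pow N).const_mul _,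
    fun z hz => ?_, ?_⟩
  · rw [hnorm]
    refine mul_le_of_le_one_right one_half_pos.le (pow_le_one₀ (by positivity) ?_)
    exact (div_le_one hD).2 ((norm_le_iSup_of_mem hK hKΩ hf hz).trans hKD.le)
  · rw [hnorm]
    linarith

/-- Runge domains of holomorphy, described as the open sets which contain the polynomially convex
hulls of their compact subsets. -/
structure IsRungeDomain (Ω : Set E) : Prop where
  isOpen : IsOpen Ω
  holHull_univ_subset : ∀ ⦃C : Set E⦄, IsCompact C → C ⊆ Ω → holHull univ C ⊆ Ω

lemma isRungeDomain_univ : IsRungeDomain (univ : Set E) :=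
  ⟨isOpen_univ, fun _ _ _ => subset_univ _⟩

lemma IsRungeDomain.of_convex [NormedSpace ℝ E] [IsScalarTower ℝ ℂ E] (hΩ : IsOpen Ω)
    (hconv : Convex ℝ Ω) : IsRungeDomain Ω := by
  refine ⟨hΩ, fun C hC hCΩ b hb => by_contra fun hbΩ => ?_⟩
  obtain ⟨ℓ, hℓ⟩ := RCLike.geometric_hahn_banach_open_point (𝕜 := ℂ) hconv hΩ hbΩ
  have hexp : Differentiable ℂ fun z => Complex.exp (ℓ z) := ℓ.differentiable.cexp
  rcases C.eq_empty_or_nonempty with rfl | hne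
  · exact (norm_pos_iff.2 (Complex.exp_ne_zero (ℓ b))).not_ge <|
      norm_le_of_mem_holHull hb hexp.differentiableOn le_rfl fun z hz => hz.elim
  · obtain ⟨x, hx, hmax⟩ := hC.exists_isMaxOn hne
      (Complex.continuous_re.comp ℓ.continuous).continuousOn
    refine (hℓ x (hCΩ hx)).not_ge ?_
    have h := norm_le_of_mem_holHull hb hexp.differentiableOn (Real.exp_pos (ℓ x).re).le
      fun z hz => ?_
    · rwa [Complex.norm_exp, Real.exp_le_exp] at h
    · rw [Complex.norm_exp]
      exact Real.exp_le_exp.2 (hmax hz)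

lemma IsRungeDomain.preimage (hΩ : IsRungeDomain Ω) (φ : F ≃L[ℂ] E) : IsRungeDomain (φ ⁻¹' Ω) where
  isOpen := hΩ.isOpen.preimage φ.continuous
  holHull_univ_subset _ hC hCΩ _ hx :=
    hΩ.holHull_univ_subset (hC.image φ.continuous) (image_subset_iff.2 hCΩ)
      (mapsTo_holHull_image φ.differentiable.differentiableOn (mapsTo_univ _ _) hx)

lemma holHull_subset_closedBall {c : E} {r : ℝ} (hr : 0 ≤ r) (hK : K ⊆ closedBall c r) :
    holHull Ω K ⊆ closedBall c r := fun x hx => by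
  obtain ⟨ℓ, hℓ, hℓx⟩ := exists_dual_vector'' ℂ (x - c)
  have h : ‖ℓ (x - c)‖ ≤ r := norm_le_of_mem_holHull hx
    (ℓ.differentiable.comp (differentiable_id.sub_const c)).differentiableOn hr fun z hz =>
      (ℓ.le_of_opNorm_le hℓ (z - c)).trans <| by
        simpa only [one_mul] using mem_closedBall_iff_norm.1 (hK hz)
  rw [hℓx, RCLike.norm_ofReal, abs_norm] at h
  exact mem_closedBall_iff_norm.2 h

lemma isBounded_holHull (hK : Bornology.IsBounded K) : Bornology.IsBounded (holHull Ω K) := by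
  obtain ⟨r, hr, hKr⟩ := hK.subset_closedBall_lt 0 0
  exact isBounded_closedBall.subset (holHull_subset_closedBall hr.le hKr)

lemma isClosed_holHull_of_subset {H : Set E} (hH : IsClosed H) (hHΩ : H ⊆ Ω)
    (hsub : holHull Ω K ⊆ H) : IsClosed (holHull Ω K) := by
  have heq : holHull Ω K = H ∩ ⋂ f ∈ {f : E → ℂ | DifferentiableOn ℂ f Ω},
      H ∩ {x | ‖f x‖ ≤ ⨆ y : K, ‖f ↑y‖} := by
    refine Subset.antisymm (fun x hx => ⟨hsub hx, mem_iInter₂.2 fun f hf => ⟨hsub hx, hx.2 f hf⟩⟩)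
      ?_
    exact fun x hx => ⟨hHΩ hx.1, fun f hf => (mem_iInter₂.1 hx.2 f hf).2⟩
  rw [heq]
  refine hH.inter (isClosed_biInter fun f hf => ?_)
  exact (hf.continuousOn.mono hHΩ).norm.preimage_isClosed_of_isClosed hH isClosed_Iic

lemma IsRungeDomain.isCompact_holHull [FiniteDimensional ℂ E] (hΩ : IsRungeDomain Ω)
    (hK : IsCompact K) (hKΩ : K ⊆ Ω) : IsCompact (holHull Ω K) := by
  have : ProperSpace E := FiniteDimensional.proper ℂ E
  refine isCompact_of_isClosed_isBounded ?_ (isBounded_holHull hK.isBounded)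
  refine isClosed_holHull_of_subset (isClosed_holHull_of_subset isClosed_univ Subset.rfl
    (subset_univ _)) (hΩ.holHull_univ_subset hK hKΩ) fun x hx => ?_
  exact ⟨mem_univ x, fun f hf => hx.2 f (hf.mono (subset_univ Ω))⟩

end Hull

section OkaWeil

theorem oka_weil_pi {n : ℕ} {Ω Z : Set (Fin n → ℂ)} (hΩ : IsRungeDomain Ω) (hZ : IsCompact Z)
    (hZΩ : Z ⊆ Ω) (hull : holHull Ω Z ⊆ Z) {f : (Fin n → ℂ) → ℂ} (hf : HolNear f Z) :
    Approximable Ω Z f := by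
  obtain ⟨Q₀, hQ₀⟩ : ∃ Q₀, IsOkaPolyhedron Ω Z Q₀ := by
    obtain ⟨C, hC⟩ := hZ.isBounded.exists_norm_le
    refine ⟨_, .base (R := 2 * (|C| + 1)) (by positivity) fun z hz i => ?_⟩
    linarith [(norm_le_pi_norm z i).trans (hC z hz), le_abs_self C]
  obtain ⟨Q₁, hQ₁, hQ₁Ω⟩ := hQ₀.exists_subset_inter hΩ.isOpen fun b hb => by
    obtain ⟨p, hp, hpZ, hpb⟩ := exists_norm_le_half_two_le_of_notMem_holHull hZ (subset_univ Z)
      (mem_univ b) fun h => hb.2 (hΩ.holHull_univ_subset hZ hZΩ h)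
    exact ⟨p, hp.mono (subset_univ Ω), .of_differentiable (differentiableOn_univ.1 hp), hpZ, hpb⟩
  obtain ⟨U, hU, hZU, hfU⟩ := mem_nhdsSet_iff_exists.1 hf
  obtain ⟨Q₂, hQ₂, hQ₂U⟩ := hQ₁.exists_subset_inter hU fun b hb => by
    obtain ⟨p, hp, hpZ, hpb⟩ := exists_norm_le_half_two_le_of_notMem_holHull hZ hZΩ (hQ₁Ω hb.1).2
      fun h => hb.2 (hZU (hull h))
    exact ⟨p, hp, .of_differentiableOn hΩ.isOpen hp fun z hz => (hQ₁Ω hz).2, hpZ, hpb⟩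
  exact hQ₂.approximable hZ (.of_differentiableOn hU
    (fun z hz => (hfU hz).differentiableWithinAt) fun z hz => (hQ₂U hz).2)

variable {E : Type*} [NormedAddCommGroup E] [NormedSpace ℂ E] [FiniteDimensional ℂ E]
  {Ω K L : Set E}

theorem oka_weil {Z : Set E} (hΩ : IsRungeDomain Ω) (hZ : IsCompact Z) (hZΩ : Z ⊆ Ω)
    (hull : holHull Ω Z ⊆ Z) {f : E → ℂ} (hf : HolNear f Z) : Approximable Ω Z f := by
  let φ : E ≃L[ℂ] (Fin (Module.finrank ℂ E) → ℂ) := (Module.finBasis ℂ E).equivFunL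
  have hmaps {S : Set E} : MapsTo φ.symm (φ.symm ⁻¹' S) S := mapsTo_preimage _ _
  have himage : φ.symm '' (φ.symm ⁻¹' Z) = Z := image_preimage_eq Z φ.symm.surjective
  have hull' : holHull (φ.symm ⁻¹' Ω) (φ.symm ⁻¹' Z) ⊆ φ.symm ⁻¹' Z := fun x hx => hull <| by
    have h := mapsTo_holHull_image φ.symm.differentiable.differentiableOn hmaps hx
    rwa [himage] at h
  have hZ' : IsCompact (φ.symm ⁻¹' Z) := φ.symm.toHomeomorph.isCompact_preimage.2 hZ
  intro ε hε
  obtain ⟨F, hF, hFf⟩ := oka_weil_pi (hΩ.preimage φ.symm) hZ' (preimage_mono hZΩ) hull'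
    (hf.comp (.of_differentiable φ.symm.differentiable) hmaps) ε hε
  refine ⟨F ∘ φ, hF.comp φ.differentiable.differentiableOn fun z hz => ?_, fun z hz => ?_⟩
  · simpa using hz
  · simpa using hFf (φ z) (by simpa using hz)

lemma exists_norm_le_norm_sub_one_le_of_disjoint_holHull (hΩ : IsRungeDomain Ω) (hK : IsCompact K)
    (hKΩ : K ⊆ Ω) (hL : IsCompact L) (hLΩ : L ⊆ Ω) (hdisj : Disjoint (holHull Ω K) (holHull Ω L))
    (hunion : holHull Ω (K ∪ L) ⊆ holHull Ω K ∪ holHull Ω L) {ε : ℝ} (hε : 0 < ε) :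
    ∃ f : E → ℂ, DifferentiableOn ℂ f Ω ∧ (∀ z ∈ K, ‖f z‖ ≤ ε) ∧ ∀ z ∈ L, ‖f z - 1‖ ≤ ε := by
  have hKL := hK.union hL
  have hKLΩ := union_subset hKΩ hLΩ
  have hK' := hΩ.isCompact_holHull hK hKΩ
  have hL' := hΩ.isCompact_holHull hL hLΩ
  have hsub := holHull_union_holHull_subset hK hKΩ hL hLΩ
  have hull : holHull Ω (holHull Ω K ∪ holHull Ω L) ⊆ holHull Ω K ∪ holHull Ω L :=
    (holHull_mono (hΩ.isCompact_holHull hKL hKLΩ) holHull_subset hsub).trans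
      (holHull_holHull_subset.trans hunion)
  obtain ⟨e, heK, heL⟩ := exists_eventuallyEq_nhdsSet_of_isCompact hK' hL'
    (f := fun _ => (0 : ℂ)) (g := fun _ => 1) (by simp [hdisj.inter_eq, Filter.EventuallyEq])
  have he : HolNear e (holHull Ω K ∪ holHull Ω L) :=
    .union (.congr (.of_differentiable (differentiable_const 0)) heK)
      (.congr (.of_differentiable (differentiable_const 1)) heL)
  obtain ⟨f, hf, hfe⟩ := oka_weil hΩ (hK'.union hL') (union_subset holHull_subset holHull_subset)
    hull he ε hε
  refine ⟨f, hf, fun z hz => ?_, fun z hz => ?_⟩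
  · have hz' := subset_holHull hK hKΩ hz
    have h := hfe z (.inl hz')
    rw [heK.self_of_nhdsSet hz', zero_sub, norm_neg] at h
    exact h.le
  · have hz' := subset_holHull hL hLΩ hz
    have h := hfe z (.inr hz')
    rw [heL.self_of_nhdsSet hz', norm_sub_rev] at h
    exact h.le

end OkaWeil

/-! ### Unions of polynomially convex sets in the plane -/

section ContinuousLog

variable {X : Type*} [TopologicalSpace X] {S T : Set X} {u v : X → ℂ}

/-- `u` has a continuous logarithm on `S`. -/
def HasLogOn (u : X → ℂ) (S : Set X) : Prop :=
  ∃ g : X → ℂ, ContinuousOn g S ∧ ∀ z ∈ S, Complex.exp (g z) = u z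

lemma hasLogOn_const {a : ℂ} (ha : a ≠ 0) : HasLogOn (fun _ => a) S :=
  ⟨fun _ => Complex.log a, continuousOn_const, fun _ _ => Complex.exp_log ha⟩

lemma HasLogOn.union (hS : IsClosed S) (hT : IsClosed T) (hST : Disjoint S T)
    (huS : HasLogOn u S) (huT : HasLogOn u T) : HasLogOn u (S ∪ T) := by
  classical
  obtain ⟨g, hg, hgu⟩ := huS
  obtain ⟨k, hk, hku⟩ := huT
  have heqS : EqOn (S.piecewise g k) g S := S.piecewise_eqOn g k
  have heqT : EqOn (S.piecewise g k) k T := (S.piecewise_eqOn_compl g k).mono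
    (disjoint_left.1 hST.symm)
  refine ⟨S.piecewise g k, (hg.congr heqS).union_of_isClosed (hk.congr heqT) hS hT, ?_⟩
  rintro z (hz | hz)
  · rw [heqS hz, hgu z hz]
  · rw [heqT hz, hku z hz]

lemma HasLogOn.of_norm_sub_lt (hu : HasLogOn u S) (hv : ContinuousOn v S)
    (hvu : ∀ z ∈ S, ‖v z - u z‖ < ‖u z‖) : HasLogOn v S := by
  obtain ⟨g, hg, hgu⟩ := hu
  have hslit : ∀ z ∈ S, v z / Complex.exp (g z) ∈ Complex.slitPlane := fun z hz => by
    have hmem := Complex.mem_slitPlane_of_norm_lt_one (z := (v z - u z) / u z) <| by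
      rw [norm_div]
      exact (div_lt_one ((norm_nonneg _).trans_lt (hvu z hz))).2 (hvu z hz)
    have hne : u z ≠ 0 := norm_pos_iff.1 ((norm_nonneg _).trans_lt (hvu z hz))
    rwa [sub_div, div_self hne, add_sub_cancel, ← hgu z hz] at hmem
  refine ⟨fun z => g z + Complex.log (v z / Complex.exp (g z)), ?_, fun z hz => ?_⟩
  · exact hg.add ((hv.div hg.cexp fun z _ => Complex.exp_ne_zero _).clog hslit)
  · rw [Complex.exp_add, Complex.exp_log (Complex.slitPlane_ne_zero (hslit z hz)),
      mul_div_cancel₀ _ (Complex.exp_ne_zero _)]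

end ContinuousLog

section Planar

variable {A B V : Set ℂ} {b c : ℂ}

lemma exists_forall_le_norm_sub (hA : IsClosed A) (hc : c ∉ A) :
    ∃ δ > 0, ∀ z ∈ A, δ ≤ ‖z - c‖ := by
  obtain ⟨δ, hδ, hball⟩ := Metric.isOpen_iff.1 hA.isOpen_compl c hc
  exact ⟨δ, hδ, fun z hz => not_lt.1 fun hlt => hball (mem_ball_iff_norm.2 hlt) hz⟩

lemma eventually_notMem_and_hasLogOn_sub_iff (hA : IsClosed A) (hc : c ∉ A) :
    ∀ᶠ c' in 𝓝 c, c' ∉ A ∧ (HasLogOn (· - c') A ↔ HasLogOn (· - c) A) := by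
  obtain ⟨δ, hδ, hAδ⟩ := exists_forall_le_norm_sub hA hc
  filter_upwards [Metric.ball_mem_nhds c (half_pos hδ), hA.isOpen_compl.mem_nhds hc]
    with c' hc' hc'A
  rw [mem_ball_iff_norm] at hc'
  refine ⟨hc'A, fun h => h.of_norm_sub_lt (by fun_prop) fun z hz => ?_,
    fun h => h.of_norm_sub_lt (by fun_prop) fun z hz => ?_⟩
  · rw [sub_sub_sub_cancel_left]
    linarith [hAδ z hz, norm_sub_le_norm_sub_add_norm_sub z c' c]
  · rw [sub_sub_sub_cancel_left, norm_sub_rev]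
    linarith [hAδ z hz]

-- The points off `A` without a logarithm form a bounded open set with frontier in `A`, so by the
-- maximum principle they lie in the hull of `A`.
lemma hasLogOn_sub_of_notMem (hA : IsCompact A) (hull : holHull univ A ⊆ A) (hb : b ∉ A) :
    HasLogOn (· - b) A := by
  by_contra hblog
  set T : Set ℂ := {c | c ∉ A ∧ ¬HasLogOn (· - c) A}
  have hTbdd : Bornology.IsBounded T := by
    obtain ⟨C, hC⟩ := hA.isBounded.exists_norm_le
    refine isBounded_iff_forall_norm_le.2 ⟨|C|, fun c hc => not_lt.1 fun hlt => hc.2 ?_⟩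
    have hc0 : -c ≠ 0 := neg_ne_zero.2 (norm_pos_iff.1 ((abs_nonneg C).trans_lt hlt))
    refine (hasLogOn_const hc0).of_norm_sub_lt (by fun_prop) fun z hz => ?_
    rw [sub_neg_eq_add, sub_add_cancel, norm_neg]
    exact ((hC z hz).trans (le_abs_self C)).trans_lt hlt
  have hTopen : IsOpen T := isOpen_iff_mem_nhds.2 fun c hc => by
    filter_upwards [eventually_notMem_and_hasLogOn_sub_iff hA.isClosed hc.1] with c' hc'
    exact ⟨hc'.1, hc'.2.not.2 hc.2⟩
  have hTfront : frontier T ⊆ A := fun c hc => by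
    by_contra hcA
    rw [hTopen.frontier_eq] at hc
    obtain ⟨c', hc'T, -, hiff⟩ := ((mem_closure_iff_frequently.1 hc.1).and_eventually
      (eventually_notMem_and_hasLogOn_sub_iff hA.isClosed hcA)).exists
    exact hc.2 ⟨hcA, hiff.not.1 hc'T.2⟩
  refine hb (hull ⟨mem_univ b, fun f hf => ?_⟩)
  exact Complex.norm_le_of_forall_mem_frontier_norm_le hTbdd
    (differentiableOn_univ.1 hf).diffContOnCl
    (fun z hz => norm_le_iSup_of_mem hA (subset_univ A) hf (hTfront hz))
    (subset_closure ⟨hb, hblog⟩)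

lemma not_hasLogOn_sub_sphere {R : ℝ} (hR : 0 < R) : ¬HasLogOn (· - b) (sphere b R) := by
  rintro ⟨g, hg, hgb⟩
  have hmem (θ : ℝ) : circleMap b R θ ∈ sphere b R := circleMap_mem_sphere b hR.le θ
  have hlift : (fun θ : ℝ => g (circleMap b R θ)) =
      fun θ : ℝ => g (circleMap b R 0) + θ * Complex.I := by
    refine Complex.isCoveringMap_exp.eq_of_comp_eq
      (hg.comp_continuous (continuous_circleMap b R) hmem) (by fun_prop)
      (funext fun θ => Subtype.ext ?_) 0 (by simp)
    have hexp (θ : ℝ) : Complex.exp (g (circleMap b R θ)) = circleMap b R θ - b := hgb _ (hmem θ)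
    simp only [Function.comp_apply, Complex.exp_add, hexp]
    simp [circleMap]
  have h := congrFun hlift (2 * Real.pi)
  have hperiod : circleMap b R (2 * Real.pi) = circleMap b R 0 := by simp [circleMap]
  simp [hperiod, Real.pi_ne_zero] at h

lemma not_hasLogOn_sub_of_frontier_subset (hB : IsClosed B) (hV : Bornology.IsBounded V)
    (hfront : frontier V ⊆ B) (hb : b ∈ V) : ¬HasLogOn (· - b) B := by
  classical
  rintro ⟨g, hg, hgB⟩
  obtain ⟨G, hG⟩ := ContinuousMap.exists_restrict_eq hB ⟨B.domRestrict g, hg.domRestrict⟩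
  have hGB : ∀ z ∈ B, Complex.exp (G z) = z - b := fun z hz =>
    (congrArg Complex.exp (DFunLike.congr_fun hG ⟨z, hz⟩)).trans (hgB z hz)
  let Θ : ℂ → ℂ := fun z => if z ∈ V then Complex.exp (G z) else z - b
  have hΘ : Continuous Θ := Continuous.if (fun z hz => hGB z (hfront hz))
    (Complex.continuous_exp.comp G.continuous) (by fun_prop)
  have hΘ_ne : (0 : ℂ) ∉ Θ '' univ := by
    rintro ⟨z, -, hz⟩
    by_cases hzV : z ∈ V
    · exact Complex.exp_ne_zero (G z) (by simpa only [Θ, if_pos hzV] using hz)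
    · simp only [Θ, if_neg hzV, sub_eq_zero] at hz
      exact hzV (hz ▸ hb)
  have : ContractibleSpace (univ : Set ℂ) := convex_univ.contractibleSpace univ_nonempty
  have hsimple : IsSimplyConnected (univ : Set ℂ) := inferInstanceAs (SimplyConnectedSpace univ)
  obtain ⟨Λ, hΛ, hΛΘ⟩ := Complex.exists_continuousOn_eqOn_exp_comp hsimple isOpen_univ
    hΘ.continuousOn hΘ_ne
  obtain ⟨R, hR0, hR⟩ := hV.subset_ball_lt 0 b
  refine not_hasLogOn_sub_sphere (b := b) hR0 ⟨Λ, hΛ.mono (subset_univ _), fun z hz => ?_⟩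
  have hzV : z ∉ V := fun h => (mem_ball.1 (hR h)).ne hz
  exact (hΛΘ (mem_univ z)).trans (if_neg hzV)

lemma le_norm_sub_of_mem_holHull (hB : IsCompact B) (hc : c ∉ holHull univ B)
    (hb : b ∈ holHull univ B) {δ : ℝ} (hδ : 0 < δ) (hBδ : ∀ z ∈ B, δ ≤ ‖z - c‖) : δ ≤ ‖b - c‖ := by
  have hne : ∀ z ∈ holHull univ B, z - c ≠ 0 := fun z hz =>
    sub_ne_zero.2 (ne_of_mem_of_not_mem hz hc)
  have hhol : HolNear (fun z => (z - c)⁻¹) (holHull univ B) := .of_differentiableOn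
    isOpen_compl_singleton (fun z hz => ((differentiableAt_id.sub_const c).inv
      (sub_ne_zero.2 hz)).differentiableWithinAt) fun z hz => sub_ne_zero.1 (hne z hz)
  have happ := oka_weil isRungeDomain_univ (isRungeDomain_univ.isCompact_holHull hB
    (subset_univ B)) (subset_univ _) holHull_holHull_subset hhol
  have h := norm_le_of_mem_holHull_of_approximable hB (subset_univ B) happ hb
    (inv_nonneg.2 hδ.le) fun z hz => by
      rw [norm_inv]
      exact inv_anti₀ hδ (hBδ z hz)
  rw [norm_inv] at h
  exact (inv_le_inv₀ (norm_pos_iff.2 (hne b hb)) hδ).1 h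

lemma isOpen_holHull_univ_diff (hB : IsCompact B) : IsOpen (holHull univ B \ B) := by
  refine isOpen_iff_mem_nhds.2 fun b hb => ?_
  obtain ⟨δ, hδ, hBδ⟩ := exists_forall_le_norm_sub hB.isClosed hb.2
  filter_upwards [Metric.ball_mem_nhds b (half_pos hδ), hB.isClosed.isOpen_compl.mem_nhds hb.2]
    with c hc hcB
  rw [mem_ball_iff_norm'] at hc
  refine ⟨not_not.1 fun hcH => hc.not_ge ?_, hcB⟩
  refine le_norm_sub_of_mem_holHull hB hcH hb.1 (half_pos hδ) fun z hz => ?_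
  linarith [hBδ z hz, norm_sub_le_norm_sub_add_norm_sub z c b, norm_sub_rev b c]

theorem holHull_univ_union_subset_of_disjoint (hA : IsCompact A) (hB : IsCompact B)
    (hAB : Disjoint A B) (hullA : holHull univ A ⊆ A) (hullB : holHull univ B ⊆ B) :
    holHull univ (A ∪ B) ⊆ A ∪ B := fun b hb => by
  by_contra hbU
  have hU := hA.union hB
  have hH := isRungeDomain_univ.isCompact_holHull hU (subset_univ _)
  have hfront : frontier (holHull univ (A ∪ B) \ (A ∪ B)) ⊆ A ∪ B := fun z hz => by
    rw [(isOpen_holHull_univ_diff hU).frontier_eq] at hz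
    exact not_not.1 fun hzU => hz.2 ⟨closure_minimal sdiff_subset hH.isClosed hz.1, hzU⟩
  exact not_hasLogOn_sub_of_frontier_subset hU.isClosed (hH.isBounded.subset sdiff_subset) hfront
    ⟨hb, hbU⟩ <| .union hA.isClosed hB.isClosed hAB
      (hasLogOn_sub_of_notMem hA hullA fun h => hbU (.inl h))
      (hasLogOn_sub_of_notMem hB hullB fun h => hbU (.inr h))

end Planar

/-! ### Kallin's lemma -/

section Kallin

variable {E : Type*} [NormedAddCommGroup E] [NormedSpace ℂ E] {Ω K L : Set E}

lemma mem_holHull_left_of_peak (hK : IsCompact K) (hKΩ : K ⊆ Ω) (hL : IsCompact L) (hLΩ : L ⊆ Ω)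
    {x : E} (hx : x ∈ holHull Ω (K ∪ L))
    (hpeak : ∀ ε > 0, ∃ G : E → ℂ, DifferentiableOn ℂ G Ω ∧ (∀ z ∈ insert x K, ‖G z - 1‖ ≤ ε) ∧
      ∀ z ∈ L, ‖G z‖ ≤ ε) : x ∈ holHull Ω K := by
  by_contra hxK
  obtain ⟨p, hp, hpK, hpx⟩ := exists_norm_le_half_two_le_of_notMem_holHull hK hKΩ hx.1 hxK
  obtain ⟨C, hC, hpL⟩ : ∃ C > 0, ∀ z ∈ L, ‖p z‖ ≤ C := by
    have hbdd := (hL.image_of_continuousOn (hp.continuousOn.mono hLΩ)).isBounded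
    obtain ⟨C, hC, hpL⟩ := hbdd.exists_pos_norm_le
    exact ⟨C, hC, forall_mem_image.1 hpL⟩
  obtain ⟨G, hG, hGK, hGL⟩ := hpeak (min (1 / 4) C⁻¹) (by positivity)
  have hGx : 3 / 4 ≤ ‖G x‖ := by
    have h := (hGK x (mem_insert x K)).trans (min_le_left _ _)
    linarith [norm_sub_norm_le 1 (G x), norm_sub_rev 1 (G x), norm_one (α := ℂ)]
  have hpG : ‖p x * G x‖ ≤ 1 := norm_le_of_mem_holHull hx (hp.mul hG) zero_le_one fun z hz => by
    rw [Pi.mul_apply, norm_mul]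
    rcases hz with hz | hz
    · have h := (hGK z (mem_insert_of_mem x hz)).trans (min_le_left _ _)
      have hGz : ‖G z‖ ≤ 5 / 4 := by linarith [norm_sub_norm_le (G z) 1, norm_one (α := ℂ)]
      nlinarith [hpK z hz, norm_nonneg (p z)]
    · exact (mul_le_mul (hpL z hz) ((hGL z hz).trans (min_le_right _ _)) (norm_nonneg _)
        hC.le).trans_eq (mul_inv_cancel₀ hC.ne')
  rw [norm_mul] at hpG
  nlinarith

theorem holHull_union_subset_of_disjoint_holHull_image (hK : IsCompact K) (hKΩ : K ⊆ Ω)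
    (hL : IsCompact L) (hLΩ : L ⊆ Ω) {f : E → ℂ} (hf : DifferentiableOn ℂ f Ω)
    (hdisj : Disjoint (holHull univ (f '' K)) (holHull univ (f '' L))) :
    holHull Ω (K ∪ L) ⊆ holHull Ω K ∪ holHull Ω L := fun x hx => by
  have hfK := hK.image_of_continuousOn (hf.continuousOn.mono hKΩ)
  have hfL := hL.image_of_continuousOn (hf.continuousOn.mono hLΩ)
  have hA := isRungeDomain_univ.isCompact_holHull hfK (subset_univ _)
  have hB := isRungeDomain_univ.isCompact_holHull hfL (subset_univ _)
  set A := holHull univ (f '' K)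
  set B := holHull univ (f '' L)
  have hKA : MapsTo f K A := mapsTo_iff_image_subset.2 (subset_holHull hfK (subset_univ _))
  have hLB : MapsTo f L B := mapsTo_iff_image_subset.2 (subset_holHull hfL (subset_univ _))
  have hAA : holHull univ A ⊆ A := holHull_holHull_subset
  have hBB : holHull univ B ⊆ B := holHull_holHull_subset
  have hAB := holHull_univ_union_subset_of_disjoint hA hB hdisj hAA hBB
  have hsep {ε : ℝ} (hε : 0 < ε) := exists_norm_le_norm_sub_one_le_of_disjoint_holHull
    isRungeDomain_univ hA (subset_univ A) hB (subset_univ B) (hdisj.mono hAA hBB)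
    (hAB.trans (union_subset_union (subset_holHull hA (subset_univ A))
      (subset_holHull hB (subset_univ B)))) hε
  have hfx : f x ∈ A ∪ B := hAB <| holHull_mono (hA.union hB) (subset_univ _)
    (image_subset_iff.2 (union_subset (fun z hz => .inl (hKA hz)) fun z hz => .inr (hLB hz)))
    (mapsTo_holHull_image hf (mapsTo_univ f Ω) hx)
  rcases hfx with hfx | hfx
  · refine .inl (mem_holHull_left_of_peak hK hKΩ hL hLΩ hx fun ε hε => ?_)
    obtain ⟨g, hg, hgA, hgB⟩ := hsep hε
    refine ⟨fun z => 1 - g (f z), (hg.comp hf (mapsTo_univ f Ω)).const_sub 1,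
      forall_mem_insert.2 ?_, fun z hz => ?_⟩
    · simpa using ⟨hgA _ hfx, fun z hz => hgA _ (hKA hz)⟩
    · simpa [norm_sub_rev] using hgB _ (hLB hz)
  · refine .inr (mem_holHull_left_of_peak hL hLΩ hK hKΩ (union_comm K L ▸ hx) fun ε hε => ?_)
    obtain ⟨g, hg, hgA, hgB⟩ := hsep hε
    exact ⟨g ∘ f, hg.comp hf (mapsTo_univ f Ω),
      forall_mem_insert.2 ⟨hgB _ hfx, fun z hz => hgB _ (hLB hz)⟩, fun z hz => hgA _ (hKA hz)⟩

theorem exists_disjoint_holHull_image_iff [FiniteDimensional ℂ E] (hΩ : IsRungeDomain Ω)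
    (hK : IsCompact K) (hKΩ : K ⊆ Ω) (hL : IsCompact L) (hLΩ : L ⊆ Ω) :
    (∃ f : E → ℂ, DifferentiableOn ℂ f Ω ∧
        Disjoint (holHull univ (f '' K)) (holHull univ (f '' L))) ↔
      Disjoint (holHull Ω K) (holHull Ω L) ∧ holHull Ω (K ∪ L) = holHull Ω K ∪ holHull Ω L := by
  constructor
  · rintro ⟨f, hf, hdisj⟩
    refine ⟨.of_image (hdisj.mono (mapsTo_holHull_image hf (mapsTo_univ f Ω)).image_subset
      (mapsTo_holHull_image hf (mapsTo_univ f Ω)).image_subset), Subset.antisymm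
      (holHull_union_subset_of_disjoint_holHull_image hK hKΩ hL hLΩ hf hdisj)
      (holHull_union_holHull_subset hK hKΩ hL hLΩ)⟩
  · rintro ⟨hdisj, hunion⟩
    obtain ⟨f, hf, hfK, hfL⟩ := exists_norm_le_norm_sub_one_le_of_disjoint_holHull hΩ hK hKΩ hL hLΩ
      hdisj hunion.subset (show (0 : ℝ) < 1 / 4 by norm_num)
    have hballs : Disjoint (closedBall (0 : ℂ) (1 / 4)) (closedBall 1 (1 / 4)) :=
      closedBall_disjoint_closedBall (by rw [dist_zero_left, norm_one]; norm_num)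
    exact ⟨f, hf, hballs.mono
      (holHull_subset_closedBall (by norm_num) (image_subset_iff.2 fun z hz =>
        mem_closedBall_zero_iff.2 (hfK z hz)))
      (holHull_subset_closedBall (by norm_num) (image_subset_iff.2 fun z hz =>
        mem_closedBall_iff_norm.2 (hfL z hz)))⟩

end Kallin

lemma oHull_eq_holHull {n : ℕ} (Ω K : Set (CSpace n)) : OHull Ω K = holHull Ω K := rfl

lemma pHull_eq_holHull_univ (A : Set ℂ) : PHull A = holHull univ A := by
  simp only [PHull, holHull, mem_univ, true_and, differentiableOn_univ]

theorem stmt_14_general {E : Type*} [NormedAddCommGroup E] [NormedSpace ℂ E]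
    [FiniteDimensional ℂ E] {Ω K L : Set E} (hΩ : IsRungeDomain Ω) (hK : IsCompact K)
    (hKΩ : K ⊆ Ω) (hL : IsCompact L) (hLΩ : L ⊆ Ω) :
    ((∃ f : E → ℂ, DifferentiableOn ℂ f Ω ∧
        holHull univ (f '' K) ∩ holHull univ (f '' L) = ∅) ↔
      (holHull Ω K ∩ holHull Ω L = ∅ ∧ holHull Ω (K ∪ L) = holHull Ω K ∪ holHull Ω L)) ∧
    (K ∩ L = ∅ → holHull Ω K = K → holHull Ω L = L →
      (holHull Ω (K ∪ L) = K ∪ L ↔ ∃ f : E → ℂ, DifferentiableOn ℂ f Ω ∧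
        holHull univ (f '' K) ∩ holHull univ (f '' L) = ∅)) := by
  have key := exists_disjoint_holHull_image_iff hΩ hK hKΩ hL hLΩ
  simp only [← disjoint_iff_inter_eq_empty]
  refine ⟨key, fun hKL hullK hullL => ?_⟩
  rw [key, hullK, hullL, and_iff_right hKL]

/-- For compact subsets `K, L` of a convex domain `Ω ⊆ ℂⁿ`: there is
`f ∈ 𝒪(Ω)` with disjoint polynomially convex hulls of `f(K)` and `f(L)` iff the `𝒪(Ω)`-hulls of
`K` and `L` are disjoint and the hull of `K ∪ L` is the union of the hulls. In particular, for
disjoint compact `𝒪(Ω)`-convex `K, L`, `K ∪ L` is `𝒪(Ω)`-convex iff such `f` exists. -/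
theorem stmt_14 {n : ℕ} (Ω : Set (CSpace n)) (hΩopen : IsOpen Ω) (hΩconv : Convex ℝ Ω)
    (hΩne : Ω.Nonempty)
    (K L : Set (CSpace n)) (hK : IsCompact K) (hKΩ : K ⊆ Ω) (hL : IsCompact L) (hLΩ : L ⊆ Ω) :
    ((∃ f : CSpace n → ℂ, DifferentiableOn ℂ f Ω ∧ PHull (f '' K) ∩ PHull (f '' L) = ∅) ↔
      (OHull Ω K ∩ OHull Ω L = ∅ ∧ OHull Ω (K ∪ L) = OHull Ω K ∪ OHull Ω L)) ∧
    (K ∩ L = ∅ → OHull Ω K = K → OHull Ω L = L →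
      (OHull Ω (K ∪ L) = K ∪ L ↔
        ∃ f : CSpace n → ℂ, DifferentiableOn ℂ f Ω ∧ PHull (f '' K) ∩ PHull (f '' L) = ∅)) := by
  simpa only [pHull_eq_holHull_univ, oHull_eq_holHull] using
    stmt_14_general (.of_convex hΩopen hΩconv) hK hKΩ hL hLΩ
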